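/- Let C be an Ω-tropical curve and let C' be a plane tropical curve with C = C' ∩ Ω. Then there exists a unique tropical polynomial F' : ℝ² → ℝ that vanishes identically on ∂Ω and whose corner locus, with its canonical weights, equals C'. Moreover the restriction F = F'|_Ω depends only on C and not on the choice of the extension C'; F is called the Ω-tropical polynomial of C. -/

import Mathlib

open Filter
open scoped Pointwise Topology

/-! ## The abelian sandpile model on a finite subset `Γ` of `ℤ²` -/

/-- Lattice sites. -/
abbrev V : Type := ℤ × ℤ

/-- The four lattice neighbours of `v`. -/
def nbrs (v : V) : Finset V :=
  {(v.1 + 1, v.2), (v.1 - 1, v.2), (v.1, v.2 + 1), (v.1, v.2 - 1)}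

/-- A sandpile state on `Γ`: a nonnegative integer valued function, regarded as a
function on all of `ℤ²` vanishing outside `Γ`. -/
def IsState (Γ : Set V) (φ : V → ℤ) : Prop :=
  (∀ v, 0 ≤ φ v) ∧ ∀ v ∉ Γ, φ v = 0

open Classical in
/-- The toppling operator at `v ∈ Γ`: `T_v φ = φ - 4δ_v + ∑_{w ∈ n(v) ∩ Γ} δ_w`. -/
noncomputable def toppleAt (Γ : Set V) (v : V) (φ : V → ℤ) : V → ℤ :=
  fun w => φ w - (if w = v then 4 else 0) + (if w ∈ nbrs v ∧ w ∈ Γ then 1 else 0)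

/-- A state is stable if it is at most `3` everywhere on `Γ`. -/
def StableState (Γ : Set V) (φ : V → ℤ) : Prop := ∀ v ∈ Γ, φ v ≤ 3

/-- One legal toppling step: topple some `v ∈ Γ` with `φ v ≥ 4`. -/
def LegalStep (Γ : Set V) (φ ψ : V → ℤ) : Prop :=
  ∃ v ∈ Γ, 4 ≤ φ v ∧ ψ = toppleAt Γ v φ

/-- `ρ 0, ρ 1, …, ρ m` is a relaxation of `φ`: a sequence of legal topplings
ending in a stable state. -/
def IsRelaxation (Γ : Set V) (φ : V → ℤ) (m : ℕ) (ρ : ℕ → V → ℤ) : Prop :=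
  ρ 0 = φ ∧ (∀ i < m, LegalStep Γ (ρ i) (ρ (i + 1))) ∧ StableState Γ (ρ m)

/-- `ψ` is the result of some relaxation of `φ`. -/
def Relaxes (Γ : Set V) (φ ψ : V → ℤ) : Prop :=
  ∃ m ρ, IsRelaxation Γ φ m ρ ∧ ρ m = ψ

/-! ## Geometry: lattice polygons, scaled lattice sets, deviation sets -/

/-- The embedding of the lattice `ℤ²` into the plane `ℝ²`. -/
def toR (v : ℤ × ℤ) : ℝ × ℝ := ((v.1 : ℝ), (v.2 : ℝ))

/-- `Ω` is a non-degenerate convex lattice polygon: the convex hull of a finite set of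
lattice points, with nonempty interior. -/
def IsLatticePolygon (Ω : Set (ℝ × ℝ)) : Prop :=
  (∃ S : Finset (ℤ × ℤ), Ω = convexHull ℝ (toR '' ↑S)) ∧ (interior Ω).Nonempty

/-- `Γ_N = (NΩ) ∩ ℤ²`. -/
def latGrid (Ω : Set (ℝ × ℝ)) (N : ℕ) : Set V := {v : V | toR v ∈ (N : ℝ) • Ω}

/-- Coordinate-wise floor `[Np] ∈ ℤ²` of the rescaled point `Np`, `p ∈ ℝ²`. -/
noncomputable def flr (N : ℕ) (p : ℝ × ℝ) : V := (⌊(N : ℝ) * p.1⌋, ⌊(N : ℝ) * p.2⌋)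

open Classical in
/-- The perturbed maximal state `3 + ∑_{p ∈ P} δ_{[Np]}` on `Γ_N` (as a function on `ℤ²`
vanishing outside `Γ_N`). -/
noncomputable def stateN (Ω : Set (ℝ × ℝ)) (P : Finset (ℝ × ℝ)) (N : ℕ) : V → ℤ :=
  fun v => if v ∈ latGrid Ω N then 3 + ∑ p ∈ P, (if v = flr N p then 1 else 0) else 0

/-- The scaled deviation set `C_N = (1/N)·{v ∈ Γ_N : ψ v < 3}` of a state `ψ` on `Γ_N`. -/
def devSet (Ω : Set (ℝ × ℝ)) (N : ℕ) (ψ : V → ℤ) : Set (ℝ × ℝ) :=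
  {x | ∃ v ∈ latGrid Ω N, ψ v < 3 ∧ x = ((v.1 : ℝ) / N, (v.2 : ℝ) / N)}

/-- `l ∈ ℤ²` is the primitive integer vector of the direction `d ∈ ℝ²`:
its coordinates are coprime and `d` is a positive multiple of `l`. -/
def PrimOut (d : ℝ × ℝ) (l : ℤ × ℤ) : Prop :=
  Int.gcd l.1 l.2 = 1 ∧ ∃ t : ℝ, 0 < t ∧ d = t • toR l

/-- `d ∈ ℝ²` has rational slope (it is a positive multiple of an integer vector). -/
def RatDir (d : ℝ × ℝ) : Prop := ∃ l, PrimOut d l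

open Classical in
/-- The primitive integer vector of a direction `d` with rational slope
(junk value `0` otherwise). -/
noncomputable def prim (d : ℝ × ℝ) : ℤ × ℤ :=
  if h : ∃ l, PrimOut d l then h.choose else 0

/-- An edge (straight closed segment) recorded by its two endpoints. -/
abbrev Seg : Type := (ℝ × ℝ) × (ℝ × ℝ)

/-- The closed segment of an edge. -/
def seg (e : Seg) : Set (ℝ × ℝ) := segment ℝ e.1 e.2

/-! ## Ω-tropical curves -/

/-- A valid edge set: no degenerate edges and each edge recorded in one orientation only. -/
def EdgeSet (E : Finset Seg) : Prop := ∀ e ∈ E, e.1 ≠ e.2 ∧ (e.2, e.1) ∉ E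

/-- Edges meet only at common endpoints. -/
def Planar (E : Finset Seg) : Prop :=
  ∀ e ∈ E, ∀ e' ∈ E, e ≠ e' →
    seg e ∩ seg e' ⊆ ({e.1, e.2} : Set (ℝ × ℝ)) ∩ {e'.1, e'.2}

/-- The support of the graph: the union of its closed edges. -/
def gsupp (E : Finset Seg) : Set (ℝ × ℝ) := ⋃ e ∈ E, seg e

/-- `v` is a vertex of the graph `E`. -/
def IsVert (E : Finset Seg) (v : ℝ × ℝ) : Prop := ∃ e ∈ E, e.1 = v ∨ e.2 = v

/-- The primitive integer vector of the edge `e`, oriented out of its endpoint `v`. -/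
noncomputable def outDir (v : ℝ × ℝ) (e : Seg) : ℤ × ℤ :=
  if e.1 = v then prim (e.2 - e.1) else prim (e.1 - e.2)

open Classical in
/-- The balancing sum `∑_{e ∈ E_v} m_e l_e` at `v`, over edges incident to `v`, with
`l_e` oriented out of `v`. -/
noncomputable def balSum (E : Finset Seg) (m : Seg → ℕ) (v : ℝ × ℝ) : ℤ × ℤ :=
  ∑ e ∈ E.filter (fun e => e.1 = v ∨ e.2 = v), (m e : ℤ) • outDir v e

/-- The segment `[a, b]` is a side of the polygon `Ω`: its endpoints are distinct
vertices (extreme points) of `Ω` and it lies in the boundary of `Ω`. -/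
def IsSide (Ω : Set (ℝ × ℝ)) (a b : ℝ × ℝ) : Prop :=
  a ≠ b ∧ a ∈ Set.extremePoints ℝ Ω ∧ b ∈ Set.extremePoints ℝ Ω ∧
    segment ℝ a b ⊆ frontier Ω

/-- A labeling of the sides of `Ω` by positive integers (independent of orientation). -/
def SideLabel (Ω : Set (ℝ × ℝ)) (d : Seg → ℤ) : Prop :=
  ∀ a b : ℝ × ℝ, IsSide Ω a b → 0 < d (a, b) ∧ d (a, b) = d (b, a)

/-- The outer balancing equations: at every vertex `v` of `Ω` with incident sides
`s₁ = [v,a]`, `s₂ = [v,b]`, one has `∑_{e ∈ E_v} m_e l_e = d_{s₁} l_{s₁} + d_{s₂} l_{s₂}`. -/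
def OuterBalEq (Ω : Set (ℝ × ℝ)) (E : Finset Seg) (m : Seg → ℕ) (d : Seg → ℤ) : Prop :=
  ∀ v ∈ Set.extremePoints ℝ Ω, ∀ a b : ℝ × ℝ, a ≠ b →
    IsSide Ω v a → IsSide Ω v b →
      balSum E m v = d (v, a) • prim (a - v) + d (v, b) • prim (b - v)

/-- `(E, m)` is an `Ω`-tropical curve: a finite weighted planar graph contained in `Ω`
whose edges have rational slopes and positive integer weights, meeting `∂Ω` exactly in
the vertices of `Ω`, balanced at every vertex interior to `Ω`, and satisfying the outer
balancing condition at the vertices of `Ω` for a unique positive labeling of the sides. -/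
def OmegaTropCurve (Ω : Set (ℝ × ℝ)) (E : Finset Seg) (m : Seg → ℕ) : Prop :=
  EdgeSet E ∧ Planar E ∧ (∀ e ∈ E, 0 < m e) ∧ (∀ e ∈ E, RatDir (e.2 - e.1)) ∧
  gsupp E ⊆ Ω ∧
  gsupp E ∩ frontier Ω = Set.extremePoints ℝ Ω ∧
  (∀ v : ℝ × ℝ, IsVert E v → v ∈ interior Ω → balSum E m v = 0) ∧
  ∃ d : Seg → ℤ, SideLabel Ω d ∧ OuterBalEq Ω E m d ∧
    ∀ d' : Seg → ℤ, SideLabel Ω d' → OuterBalEq Ω E m d' →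
      ∀ a b : ℝ × ℝ, IsSide Ω a b → d' (a, b) = d (a, b)

/-! ## Plane tropical curves -/

/-- Combinatorial data of a plane tropical curve: finitely many bounded edges (segments)
and unbounded edges (rays, given by a base point and a primitive integer direction),
with positive integer weights. -/
structure PlaneTropData where
  segs : Finset Seg
  rays : Finset ((ℝ × ℝ) × (ℤ × ℤ))
  msegs : Seg → ℕ
  mrays : (ℝ × ℝ) × (ℤ × ℤ) → ℕ

/-- The closed ray from `r.1` in the direction `r.2`. -/
def raySet (r : (ℝ × ℝ) × (ℤ × ℤ)) : Set (ℝ × ℝ) :=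
  {x | ∃ t : ℝ, 0 ≤ t ∧ x = r.1 + t • toR r.2}

/-- The support of a plane tropical curve. -/
def ptcSupp (C : PlaneTropData) : Set (ℝ × ℝ) :=
  (⋃ e ∈ C.segs, seg e) ∪ ⋃ r ∈ C.rays, raySet r

/-- `v` is a vertex of the plane tropical curve. -/
def ptcVert (C : PlaneTropData) (v : ℝ × ℝ) : Prop :=
  (∃ e ∈ C.segs, e.1 = v ∨ e.2 = v) ∨ ∃ r ∈ C.rays, r.1 = v

open Classical in
/-- The balancing sum at `v`: incident bounded edges and rays emanating from `v`,
with multiplicities, all oriented out of `v`. -/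
noncomputable def ptcBalSum (C : PlaneTropData) (v : ℝ × ℝ) : ℤ × ℤ :=
  balSum C.segs C.msegs v +
    ∑ r ∈ C.rays.filter (fun r => r.1 = v), (C.mrays r : ℤ) • r.2

/-- `C` is a plane tropical curve: a planar graph in `ℝ²` with finitely many edges
(possibly unbounded) of rational slope and positive integer weight, satisfying the
balancing condition at every vertex. -/
def IsPlaneTropCurve (C : PlaneTropData) : Prop :=
  EdgeSet C.segs ∧
  (∀ e ∈ C.segs, 0 < C.msegs e ∧ RatDir (e.2 - e.1)) ∧
  (∀ r ∈ C.rays, 0 < C.mrays r ∧ Int.gcd r.2.1 r.2.2 = 1) ∧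
  (∀ e ∈ C.segs, ∀ e' ∈ C.segs, e ≠ e' →
    seg e ∩ seg e' ⊆ ({e.1, e.2} : Set (ℝ × ℝ)) ∩ {e'.1, e'.2}) ∧
  (∀ e ∈ C.segs, ∀ r ∈ C.rays,
    seg e ∩ raySet r ⊆ ({e.1, e.2} : Set (ℝ × ℝ)) ∩ {r.1}) ∧
  (∀ r ∈ C.rays, ∀ r' ∈ C.rays, r ≠ r' →
    raySet r ∩ raySet r' ⊆ ({r.1} : Set (ℝ × ℝ)) ∩ {r'.1}) ∧
  ∀ v : ℝ × ℝ, ptcVert C v → ptcBalSum C v = 0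

/-- The plane tropical curve `C'` extends the `Ω`-tropical curve `(E, m)`, i.e.
`C = C' ∩ Ω` as weighted graphs: the support of `C'` meets `Ω` exactly in the support
of `E`, and every edge of `E` lies in an edge of `C'` of the same weight. -/
def ExtendsCurve (Ω : Set (ℝ × ℝ)) (E : Finset Seg) (m : Seg → ℕ)
    (C : PlaneTropData) : Prop :=
  IsPlaneTropCurve C ∧ ptcSupp C ∩ Ω = gsupp E ∧
  ∀ e ∈ E, (∃ e' ∈ C.segs, seg e ⊆ seg e' ∧ C.msegs e' = m e) ∨
    (∃ r ∈ C.rays, seg e ⊆ raySet r ∧ C.mrays r = m e)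

/-! ## Tropical polynomials and corner loci -/

/-- A tropical polynomial: `F(x) = min_{(k,l) ∈ A} (k x₁ + l x₂ + a_{k,l})` for a finite
nonempty `A ⊆ ℤ²` and reals `a_{k,l}`. -/
def IsTropPoly (F : ℝ × ℝ → ℝ) : Prop :=
  ∃ (A : Finset (ℤ × ℤ)) (hA : A.Nonempty) (a : ℤ × ℤ → ℝ),
    ∀ x : ℝ × ℝ,
      F x = A.inf' hA fun kl => (kl.1 : ℝ) * x.1 + (kl.2 : ℝ) * x.2 + a kl

/-- `F` is affine in a neighbourhood of `x`. -/
def LocallyAffine (F : ℝ × ℝ → ℝ) (x : ℝ × ℝ) : Prop :=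
  ∃ U ∈ nhds x, ∃ c₁ c₂ c₀ : ℝ, ∀ y ∈ U, F y = c₁ * y.1 + c₂ * y.2 + c₀

/-- The corner locus of `F`: the points where `F` is not locally affine. -/
def cornerLocus (F : ℝ × ℝ → ℝ) : Set (ℝ × ℝ) := {x | ¬ LocallyAffine F x}

/-- Near the point `x`, lying in the relative interior of an edge with primitive
direction `l`, the function `F` is the minimum of two affine functions whose gradients
differ by `m` times the rotated vector `l^⊥ = (-l₂, l₁)`; this characterizes the
canonical weight `m` of the corner locus of `F` along this edge. -/
def EdgeWeightIs (F : ℝ × ℝ → ℝ) (x : ℝ × ℝ) (l : ℤ × ℤ) (m : ℕ) : Prop :=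
  ∃ U ∈ nhds x, ∃ g₁ g₂ : ℝ × ℝ, ∃ c₁ c₂ : ℝ,
    g₁ - g₂ = (m : ℝ) • toR (-l.2, l.1) ∧
    ∀ y ∈ U, F y = min (g₁.1 * y.1 + g₁.2 * y.2 + c₁) (g₂.1 * y.1 + g₂.2 * y.2 + c₂)

/-- The corner locus of `F`, with its canonical weights, is the plane tropical
curve `C`. -/
def RepresentsCornerLocus (F : ℝ × ℝ → ℝ) (C : PlaneTropData) : Prop :=
  ptcSupp C = cornerLocus F ∧
  (∀ e ∈ C.segs, ∀ x ∈ seg e, x ≠ e.1 → x ≠ e.2 →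
    EdgeWeightIs F x (prim (e.2 - e.1)) (C.msegs e)) ∧
  (∀ r ∈ C.rays, ∀ x ∈ raySet r, x ≠ r.1 →
    EdgeWeightIs F x r.2 (C.mrays r))

/-- `F` is the `Ω`-tropical polynomial of the `Ω`-tropical curve `(E, m)`: the
restriction to `Ω` of a tropical polynomial vanishing on `∂Ω` whose corner locus is a
plane tropical curve extending `(E, m)`.  (Values of `F` outside `Ω` are irrelevant.) -/
def IsOmegaPolyOf (Ω : Set (ℝ × ℝ)) (E : Finset Seg) (m : Seg → ℕ)
    (F : ℝ × ℝ → ℝ) : Prop :=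
  ∃ (F' : ℝ × ℝ → ℝ) (C : PlaneTropData),
    ExtendsCurve Ω E m C ∧ IsTropPoly F' ∧ (∀ x ∈ frontier Ω, F' x = 0) ∧
    RepresentsCornerLocus F' C ∧ ∀ x ∈ Ω, F x = F' x

/-!
A balanced integral combination of rays has a continuous potential which bends along the rays and
is affine elsewhere: sum the linear forms `wedge l` on the sectors between the negative horizontal
axis and each ray; the jumps across that axis cancel by balancing. Conversely, by the identity
principle, a continuous function which is locally affine off a finite set of a connected open set is
affine there.

The outer balancing condition says that the curve minus its weighted sides of `Ω` is balanced.
The potential of this difference is affine outside `Ω`, so it can be normalized to vanish on `∂Ω`,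
which gives a function `G` on `Ω` depending only on the curve. Any tropical polynomial vanishing on
`∂Ω` and bending along an extension differs from `G` on `Ω` by an affine function vanishing on `∂Ω`,
hence agrees with it. For existence, subtract from the potential of the extension the affine
function by which it differs from `G` on `Ω`; being concave with finitely many integral gradients,
the result is a tropical polynomial.
-/

/-! ### Plane vectors and affine functions -/

/-- The determinant `u₁w₂ - u₂w₁`, as a bilinear form on the plane. -/
def wedge : (ℝ × ℝ) →ₗ[ℝ] (ℝ × ℝ) →ₗ[ℝ] ℝ :=
  LinearMap.mk₂ ℝ (fun u w => u.1 * w.2 - u.2 * w.1)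
    (fun u u' w => by simp only [Prod.fst_add, Prod.snd_add]; ring)
    (fun t u w => by simp only [Prod.smul_fst, Prod.smul_snd, smul_eq_mul]; ring)
    (fun u w w' => by simp only [Prod.fst_add, Prod.snd_add]; ring)
    (fun t u w => by simp only [Prod.smul_fst, Prod.smul_snd, smul_eq_mul]; ring)

lemma wedge_apply (u w : ℝ × ℝ) : wedge u w = u.1 * w.2 - u.2 * w.1 := rfl

lemma wedge_self (u : ℝ × ℝ) : wedge u u = 0 := by rw [wedge_apply]; ring

lemma continuous_wedge (u : ℝ × ℝ) : Continuous (wedge u) := by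
  simp only [funext (wedge_apply u)]; fun_prop

/-- The inclusion `ℤ² → ℝ²` as a `ℤ`-linear map. -/
def toRHom : ℤ × ℤ →ₗ[ℤ] ℝ × ℝ where
  toFun := toR
  map_add' a b := by simp [toR]
  map_smul' n a := by simp [toR]

lemma toR_neg (a : ℤ × ℤ) : toR (-a) = -toR a := map_neg toRHom a

lemma toR_sub (a b : ℤ × ℤ) : toR (a - b) = toR a - toR b := map_sub toRHom a b

lemma toR_injective : Function.Injective toR := fun a b h => by
  simpa [toR, Prod.ext_iff] using h

lemma toR_zsmul (n : ℤ) (a : ℤ × ℤ) : toR (n • a) = (n : ℝ) • toR a :=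
  (map_smul toRHom n a).trans (Int.cast_smul_eq_zsmul ℝ n (toR a)).symm

lemma toR_sum {ι : Type*} (s : Finset ι) (f : ι → ℤ × ℤ) :
    toR (∑ i ∈ s, f i) = ∑ i ∈ s, toR (f i) := map_sum toRHom f s

lemma toR_ne_zero {a : ℤ × ℤ} (h : a ≠ 0) : toR a ≠ 0 :=
  (map_ne_zero_iff toRHom toR_injective).2 h

lemma min_zero_wedge_neg (u w : ℝ × ℝ) :
    min 0 (wedge (-u) w) = min 0 (wedge u w) - wedge u w := by
  rw [map_neg, LinearMap.neg_apply]
  rcases le_total 0 (wedge u w) with h | h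
  · rw [min_eq_left h, min_eq_right (neg_nonpos.2 h), zero_sub]
  · rw [min_eq_right h, min_eq_left (neg_nonneg.2 h), sub_self]

/-- The affine function with gradient `g` and value `c` at the origin. -/
def affineFun (g : ℝ × ℝ) (c : ℝ) (x : ℝ × ℝ) : ℝ := g.1 * x.1 + g.2 * x.2 + c

lemma continuous_affineFun (g : ℝ × ℝ) (c : ℝ) : Continuous (affineFun g c) := by
  unfold affineFun; fun_prop

lemma affineFun_sub (g h : ℝ × ℝ) (b c : ℝ) :
    affineFun (g - h) (b - c) = affineFun g b - affineFun h c := by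
  funext x; simp only [affineFun, Pi.sub_apply, Prod.fst_sub, Prod.snd_sub]; ring

lemma affineFun_add_smul (g : ℝ × ℝ) (c : ℝ) (x v : ℝ × ℝ) (t : ℝ) :
    affineFun g c (x + t • v) = affineFun g c x + t * affineFun g 0 v := by
  simp only [affineFun, Prod.fst_add, Prod.snd_add, Prod.smul_fst, Prod.smul_snd, smul_eq_mul]
  ring

/-- The quarter turn of a lattice vector, so that `wedge (toR l)` has gradient `rot l`. -/
def rot (l : ℤ × ℤ) : ℤ × ℤ := (-l.2, l.1)

lemma wedge_sub_eq_affineFun (l : ℤ × ℤ) (p x : ℝ × ℝ) :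
    wedge (toR l) (x - p) = affineFun (toR (rot l)) (-wedge (toR l) p) x := by
  simp only [wedge_apply, affineFun, rot, toR, Prod.fst_sub, Prod.snd_sub, Int.cast_neg]; ring

lemma locallyAffine_iff {F : ℝ × ℝ → ℝ} {x : ℝ × ℝ} :
    LocallyAffine F x ↔ ∃ g c, F =ᶠ[𝓝 x] affineFun g c := by
  constructor
  · rintro ⟨U, hU, c₁, c₂, c₀, h⟩
    exact ⟨(c₁, c₂), c₀, mem_of_superset hU h⟩
  · rintro ⟨g, c, h⟩
    exact ⟨_, h, g.1, g.2, c, fun y hy => hy⟩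

lemma LocallyAffine.sub {F G : ℝ × ℝ → ℝ} {x : ℝ × ℝ} (hF : LocallyAffine F x)
    (hG : LocallyAffine G x) : LocallyAffine (F - G) x := by
  rw [locallyAffine_iff] at *
  obtain ⟨g, b, hg⟩ := hF
  obtain ⟨h, c, hh⟩ := hG
  exact ⟨g - h, b - c, affineFun_sub g h b c ▸ hg.sub hh⟩

/-- Near `x`, the function `F` is affine with integral gradient. -/
def LocallyIntAffine (F : ℝ × ℝ → ℝ) (x : ℝ × ℝ) : Prop :=
  ∃ g : ℤ × ℤ, ∃ c, F =ᶠ[𝓝 x] affineFun (toR g) c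

lemma LocallyIntAffine.locallyAffine {F : ℝ × ℝ → ℝ} {x : ℝ × ℝ} (h : LocallyIntAffine F x) :
    LocallyAffine F x :=
  let ⟨g, c, hg⟩ := h
  locallyAffine_iff.2 ⟨toR g, c, hg⟩

lemma LocallyIntAffine.sub {F G : ℝ × ℝ → ℝ} {x : ℝ × ℝ} (hF : LocallyIntAffine F x)
    (hG : LocallyIntAffine G x) : LocallyIntAffine (F - G) x :=
  let ⟨g, b, hg⟩ := hF
  let ⟨h, c, hh⟩ := hG
  ⟨g - h, b - c, by rw [toR_sub, affineFun_sub]; exact hg.sub hh⟩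

/-! ### The potential of a ray -/

/-- The argument in `(-π, π]` of a plane vector. -/
noncomputable def angle (y : ℝ × ℝ) : ℝ := (Complex.equivRealProdCLM.symm y).arg

lemma wedge_eq_sin (u w : ℝ × ℝ) :
    wedge u w = ‖Complex.equivRealProdCLM.symm u‖ * ‖Complex.equivRealProdCLM.symm w‖ *
      Real.sin (angle w - angle u) := by
  have hu := Complex.norm_mul_cos_arg (Complex.equivRealProdCLM.symm u)
  have hu' := Complex.norm_mul_sin_arg (Complex.equivRealProdCLM.symm u)
  have hw := Complex.norm_mul_cos_arg (Complex.equivRealProdCLM.symm w)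
  have hw' := Complex.norm_mul_sin_arg (Complex.equivRealProdCLM.symm w)
  simp only [Complex.equivRealProdCLM_symm_apply_re, Complex.equivRealProdCLM_symm_apply_im]
    at hu hu' hw hw'
  rw [wedge_apply, Real.sin_sub, angle, angle, ← hu, ← hu', ← hw, ← hw']
  ring

lemma wedge_nonneg_of_angle_le {u w : ℝ × ℝ} (h : angle u ≤ angle w)
    (h' : angle w < angle u + Real.pi) : 0 ≤ wedge u w := by
  rw [wedge_eq_sin]
  have := Real.sin_nonneg_of_nonneg_of_le_pi (sub_nonneg.2 h) (by linarith)
  positivity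

lemma wedge_nonpos_of_angle_le {u w : ℝ × ℝ} (h : angle w ≤ angle u)
    (h' : angle u < angle w + Real.pi) : wedge u w ≤ 0 := by
  have := wedge_nonneg_of_angle_le h h'
  rw [wedge_apply] at this ⊢
  linarith

lemma mem_raySet_zero_iff {l : ℤ × ℤ} (hl : l ≠ 0) {w : ℝ × ℝ} (hw : w ≠ 0) :
    w ∈ raySet (0, l) ↔ angle w = angle (toR l) := by
  have hinj := Complex.equivRealProdCLM.symm.injective
  have hsame : SameRay ℝ (toR l) w ↔ angle w = angle (toR l) := by
    rw [← Function.Injective.sameRay_map_iff (f := Complex.equivRealProdCLM.symm.toLinearMap) hinj,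
      Complex.sameRay_iff, angle, angle, eq_comm (a := Complex.arg _)]
    simp [hw, toR_ne_zero hl]
  rw [← hsame]
  constructor
  · rintro ⟨t, ht, h⟩
    rw [h, zero_add]
    exact SameRay.sameRay_nonneg_smul_right _ ht
  · intro h
    obtain ⟨t, ht, h⟩ := h.exists_nonneg_left (toR_ne_zero hl)
    exact ⟨t, ht, by rw [zero_add, h]⟩

/-- The potential of the ray spanned by `l`: the linear form `wedge l` on the sector swept
counterclockwise from the negative real axis to the ray, zero on the other side. It bends
along the ray as a tropical curve should and jumps across the negative real axis; the jumps
cancel in balanced combinations. -/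
noncomputable def rayPotential (l : ℤ × ℤ) (y : ℝ × ℝ) : ℝ :=
  if angle y < angle (toR l) then wedge (toR l) y else 0

lemma abs_rayPotential_le (l : ℤ × ℤ) (y : ℝ × ℝ) : |rayPotential l y| ≤ |wedge (toR l) y| := by
  unfold rayPotential
  split_ifs
  · exact le_rfl
  · simp

lemma rayPotential_zero (l : ℤ × ℤ) : rayPotential l 0 = 0 :=
  abs_nonpos_iff.1 (by simpa using abs_rayPotential_le l 0)

lemma continuousAt_rayPotential_zero (l : ℤ × ℤ) : ContinuousAt (rayPotential l) 0 := by
  have hwedge : Tendsto (fun y => |wedge (toR l) y|) (𝓝 0) (𝓝 0) := by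
    simpa using (continuous_wedge (toR l)).abs.tendsto 0
  rw [ContinuousAt, rayPotential_zero]
  exact squeeze_zero_norm (abs_rayPotential_le l) hwedge

/-- The negative real axis, where `angle` is discontinuous. -/
def cutAxis : Set (ℝ × ℝ) := {w | w.1 < 0 ∧ w.2 = 0}

lemma angle_eq_pi_iff {w : ℝ × ℝ} : angle w = Real.pi ↔ w ∈ cutAxis := by
  rw [angle, Complex.arg_eq_pi_iff]; rfl

lemma angle_le_pi (w : ℝ × ℝ) : angle w ≤ Real.pi := Complex.arg_le_pi _

lemma neg_pi_lt_angle (w : ℝ × ℝ) : -Real.pi < angle w := Complex.neg_pi_lt_arg _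

lemma continuousAt_angle {w : ℝ × ℝ} (hw : w ≠ 0) (hcut : w ∉ cutAxis) : ContinuousAt angle w := by
  refine ContinuousAt.comp (g := Complex.arg) (Complex.continuousAt_arg ?_)
    Complex.equivRealProdCLM.symm.continuous.continuousAt
  rw [Complex.mem_slitPlane_iff_arg]
  exact ⟨fun h => hcut (angle_eq_pi_iff.1 h), by simpa using hw⟩

lemma eventually_angle_lt_of_neg {w : ℝ × ℝ} (hw : w ∈ cutAxis) {θ : ℝ} (hθ : -Real.pi < θ) :
    ∀ᶠ y in 𝓝 w, y.2 < 0 → angle y < θ := by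
  have h := (Complex.tendsto_arg_nhdsWithin_im_neg_of_re_neg_of_im_zero
    (z := Complex.equivRealProdCLM.symm w) hw.1 hw.2).eventually (gt_mem_nhds hθ)
  rw [eventually_nhdsWithin_iff] at h
  exact Complex.equivRealProdCLM.symm.continuous.continuousAt.eventually h

lemma eventually_lt_angle_of_nonneg {w : ℝ × ℝ} (hw : w ∈ cutAxis) {θ : ℝ} (hθ : θ < Real.pi) :
    ∀ᶠ y in 𝓝 w, 0 ≤ y.2 → θ < angle y := by
  have h := (Complex.continuousWithinAt_arg_of_re_neg_of_im_zero
    (z := Complex.equivRealProdCLM.symm w) hw.1 hw.2).eventually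
    (lt_mem_nhds (hθ.trans_eq (angle_eq_pi_iff.2 hw).symm))
  rw [eventually_nhdsWithin_iff] at h
  exact Complex.equivRealProdCLM.symm.continuous.continuousAt.eventually h

open Classical in
lemma rayPotential_eventuallyEq_of_notMem_cutAxis {l : ℤ × ℤ} (hl : l ≠ 0) {w : ℝ × ℝ}
    (hw : w ≠ 0) (hcut : w ∉ cutAxis) :
    rayPotential l =ᶠ[𝓝 w] fun y =>
      (if angle w < angle (toR l) then wedge (toR l) y else 0) +
        if w ∈ raySet (0, l) then min 0 (wedge (toR l) y) else 0 := by
  have hcont := continuousAt_angle hw hcut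
  rw [mem_raySet_zero_iff hl hw]
  rcases lt_trichotomy (angle w) (angle (toR l)) with h | h | h
  · filter_upwards [hcont.eventually (gt_mem_nhds h)] with y hy
    rw [rayPotential, if_pos hy, if_pos h, if_neg h.ne, add_zero]
  · have hπ := Real.pi_pos
    filter_upwards [hcont.eventually (gt_mem_nhds (h.trans_lt (lt_add_of_pos_right _ hπ))),
      hcont.eventually (lt_mem_nhds ((sub_lt_self _ hπ).trans_eq h.symm))] with y hy hy'
    rw [if_neg h.not_lt, if_pos h, zero_add, rayPotential]
    split_ifs with hlt
    · exact (min_eq_right (wedge_nonpos_of_angle_le hlt.le (sub_lt_iff_lt_add.1 hy'))).symm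
    · exact (min_eq_left (wedge_nonneg_of_angle_le (not_lt.1 hlt) hy)).symm
  · filter_upwards [hcont.eventually (lt_mem_nhds h)] with y hy
    rw [rayPotential, if_neg hy.not_gt, if_neg h.not_gt, if_neg h.ne', add_zero]

open Classical in
lemma rayPotential_eventuallyEq_of_mem_cutAxis {l : ℤ × ℤ} (hl : l ≠ 0) {w : ℝ × ℝ}
    (hcut : w ∈ cutAxis) :
    rayPotential l =ᶠ[𝓝 w] fun y =>
      (if y.2 < 0 then wedge (toR l) y else 0) +
        if w ∈ raySet (0, l) then min 0 (wedge (toR l) y) else 0 := by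
  have hw : w ≠ 0 := fun h => by simp [cutAxis, h] at hcut
  rw [mem_raySet_zero_iff hl hw, angle_eq_pi_iff.2 hcut]
  rcases (angle_le_pi (toR l)).lt_or_eq with h | h
  · filter_upwards [eventually_angle_lt_of_neg hcut (neg_pi_lt_angle (toR l)),
      eventually_lt_angle_of_nonneg hcut h] with y hneg hnonneg
    rw [if_neg h.ne', add_zero, rayPotential]
    split_ifs with h₁ h₂ h₂
    · rfl
    · exact absurd (hnonneg (not_lt.1 h₂)) h₁.not_gt
    · exact absurd (hneg h₂) h₁
    · rfl
  · obtain ⟨hl₁, hl₂⟩ := angle_eq_pi_iff.1 h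
    filter_upwards [continuous_fst.continuousAt.eventually (gt_mem_nhds hcut.1)] with y hy
    have hwedge : wedge (toR l) y = (toR l).1 * y.2 := by rw [wedge_apply, hl₂]; ring
    have hangle : angle y < Real.pi ↔ y.2 ≠ 0 := by
      rw [(angle_le_pi y).lt_iff_ne, Ne, angle_eq_pi_iff]
      exact not_congr (and_iff_right hy)
    simp only [rayPotential, h, hangle, hwedge, if_true]
    rcases lt_trichotomy y.2 0 with hy₂ | hy₂ | hy₂
    · rw [if_pos hy₂.ne, if_pos hy₂, min_eq_left (mul_nonneg_of_nonpos_of_nonpos hl₁.le hy₂.le),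
        add_zero]
    · simp [hy₂]
    · rw [if_pos hy₂.ne', if_neg hy₂.not_gt, zero_add,
        min_eq_right (mul_nonpos_of_nonpos_of_nonneg hl₁.le hy₂.le)]

open Classical in
lemma rayPotential_eventuallyEq {l : ℤ × ℤ} (hl : l ≠ 0) {w : ℝ × ℝ} (hw : w ≠ 0) :
    rayPotential l =ᶠ[𝓝 w] fun y =>
      (if w ∈ cutAxis ∧ y.2 < 0 then wedge (toR l) y else 0) +
        (if angle w < angle (toR l) then wedge (toR l) y else 0) +
        if w ∈ raySet (0, l) then min 0 (wedge (toR l) y) else 0 := by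
  by_cases hcut : w ∈ cutAxis
  · have hangle : ¬ angle w < angle (toR l) := by
      rw [angle_eq_pi_iff.2 hcut]; exact (angle_le_pi _).not_gt
    simpa only [hcut, true_and, hangle, if_false, add_zero]
      using rayPotential_eventuallyEq_of_mem_cutAxis hl hcut
  · simpa only [hcut, false_and, if_false, zero_add]
      using rayPotential_eventuallyEq_of_notMem_cutAxis hl hw hcut

/-! ### Connectedness in the plane and the identity principle -/

section Connectedness

variable {E : Type*} [NormedAddCommGroup E] [NormedSpace ℝ E]

lemma isConnected_compl_closedBall_zero_one (h : 1 < Module.rank ℝ E) :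
    IsConnected (Metric.closedBall (0 : E) 1)ᶜ := by
  have hcont : ContinuousOn (fun y : E => (1 + ‖y‖⁻¹) • y) {0}ᶜ := by
    refine ContinuousOn.smul (continuousOn_const.add (continuous_norm.continuousOn.inv₀ ?_))
      continuousOn_id
    exact fun y hy => norm_ne_zero_iff.2 hy
  have hnorm : ∀ (y : E) (t : ℝ), 0 < t → ‖t • y‖ = t * ‖y‖ := fun y t ht => by
    rw [norm_smul, Real.norm_of_nonneg ht.le]
  convert (isConnected_compl_singleton_of_one_lt_rank h (0 : E)).image _ hcont
  refine Set.Subset.antisymm (fun x hx => ?_) (Set.image_subset_iff.2 fun y hy => ?_)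
  · have hx' : 1 < ‖x‖ := by simpa using hx
    have hx₀ : 0 < ‖x‖ := one_pos.trans hx'
    have hpos : 0 < 1 - ‖x‖⁻¹ := sub_pos.2 (inv_lt_one_of_one_lt₀ hx')
    refine ⟨(1 - ‖x‖⁻¹) • x, by simpa using ⟨hpos.ne', norm_pos_iff.1 hx₀⟩, ?_⟩
    have hne : ‖x‖ - 1 ≠ 0 := (sub_pos.2 hx').ne'
    have hscale : (1 - ‖x‖⁻¹) * ‖x‖ = ‖x‖ - 1 := by field_simp
    simp only [hnorm x _ hpos, hscale, smul_smul]
    rw [show (1 + (‖x‖ - 1)⁻¹) * (1 - ‖x‖⁻¹) = 1 by field_simp; ring, one_smul]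
  · have hy₀ : 0 < ‖y‖ := norm_pos_iff.2 hy
    rw [Set.mem_preimage, Set.mem_compl_iff, mem_closedBall_zero_iff, not_le,
      hnorm y _ (by positivity), add_mul, inv_mul_cancel₀ hy₀.ne']
    linarith

lemma isConnected_ball_diff_of_countable (h : 1 < Module.rank ℝ E) {P : Set E}
    (hP : P.Countable) : IsConnected (Metric.ball (0 : E) 1 \ P) := by
  have hinj : Function.Injective (OpenPartialHomeomorph.univUnitBall (E := E)) :=
    Set.injOn_univ.1 OpenPartialHomeomorph.univUnitBall.injOn
  have himage : OpenPartialHomeomorph.univUnitBall '' (Set.univ : Set E) = Metric.ball 0 1 :=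
    OpenPartialHomeomorph.univUnitBall.image_source_eq_target
  have hconn := ((hP.preimage hinj).isConnected_compl_of_one_lt_rank h).image _
    (OpenPartialHomeomorph.univUnitBall.continuousOn.mono (Set.subset_univ _))
  rwa [Set.compl_eq_univ_sdiff, Set.image_sdiff_preimage, himage] at hconn

lemma isConnected_interior_diff_of_convex (h : 1 < Module.rank ℝ E) {s : Set E} (hs : Convex ℝ s)
    (hne : (interior s).Nonempty) (hb : Bornology.IsBounded s) {P : Set E} (hP : P.Countable) :
    IsConnected (interior s \ P) := by
  obtain ⟨e, he, -, -⟩ := exists_homeomorph_image_interior_closure_frontier_eq_unitBall hs hne hb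
  have := isConnected_ball_diff_of_countable h (hP.image e)
  rwa [← he, ← Set.image_sdiff e.injective, e.isConnected_image] at this

lemma isConnected_compl_closure_of_convex (h : 1 < Module.rank ℝ E) {s : Set E} (hs : Convex ℝ s)
    (hne : (interior s).Nonempty) (hb : Bornology.IsBounded s) : IsConnected (closure s)ᶜ := by
  obtain ⟨e, -, he, -⟩ := exists_homeomorph_image_interior_closure_frontier_eq_unitBall hs hne hb
  have := isConnected_compl_closedBall_zero_one h
  rwa [← he, ← Set.image_compl_eq e.bijective, e.isConnected_image] at this

lemma subset_closure_interior_diff_of_convex [Nontrivial E] {s : Set E} (hs : Convex ℝ s)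
    (hne : (interior s).Nonempty) {P : Set E} (hP : P.Countable) :
    s ⊆ closure (interior s \ P) := by
  calc s ⊆ closure s := subset_closure
    _ = closure (interior s) := (hs.closure_interior_eq_closure_of_nonempty_interior hne).symm
    _ ⊆ closure (interior s \ P) := closure_minimal
      ((hP.dense_compl ℝ).open_subset_closure_inter isOpen_interior) isClosed_closure

end Connectedness

lemma one_lt_rank_plane : 1 < Module.rank ℝ (ℝ × ℝ) := by
  rw [rank_prod', Module.rank_self]; norm_num

lemma affineFun_eq_of_eventuallyEq {g h : ℝ × ℝ} {b c : ℝ} {x : ℝ × ℝ}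
    (hx : affineFun g b =ᶠ[𝓝 x] affineFun h c) : affineFun g b = affineFun h c := by
  have hanalytic : ∀ g c, AnalyticOnNhd ℝ (affineFun g c) Set.univ := fun g c x _ =>
    ((analyticAt_const.mul analyticAt_fst).add (analyticAt_const.mul analyticAt_snd)).add
      analyticAt_const
  exact (hanalytic g b).eq_of_eventuallyEq (hanalytic h c) hx

section Identity

variable {F : ℝ × ℝ → ℝ} {U : Set (ℝ × ℝ)}

lemma eventuallyEq_affineFun_of_isPreconnected (hU : IsPreconnected U)
    (h : ∀ x ∈ U, LocallyAffine F x) {x₀ : ℝ × ℝ} (hx₀ : x₀ ∈ U) {g : ℝ × ℝ} {c : ℝ}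
    (h₀ : F =ᶠ[𝓝 x₀] affineFun g c) {x : ℝ × ℝ} (hx : x ∈ U) : F =ᶠ[𝓝 x] affineFun g c := by
  refine hU.subset_of_closure_inter_subset (u := {x | F =ᶠ[𝓝 x] affineFun g c})
    isOpen_setOfPred_eventually_nhds ⟨x₀, hx₀, h₀⟩ ?_ hx
  rintro y ⟨hy, hyU⟩
  obtain ⟨g', c', hy'⟩ := locallyAffine_iff.1 (h y hyU)
  obtain ⟨z, hz', hz⟩ := mem_closure_iff_nhds.1 hy _ (eventually_eventually_nhds.2 hy')
  have hz' : F =ᶠ[𝓝 z] affineFun g' c' := hz'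
  rw [Set.mem_ofPred_eq, ← affineFun_eq_of_eventuallyEq (hz'.symm.trans hz)]
  exact hy'

lemma eqOn_closure_affineFun (hF : Continuous F) (hU : IsPreconnected U)
    (h : ∀ x ∈ U, LocallyAffine F x) {x₀ : ℝ × ℝ} (hx₀ : x₀ ∈ U) {g : ℝ × ℝ} {c : ℝ}
    (h₀ : F =ᶠ[𝓝 x₀] affineFun g c) : Set.EqOn F (affineFun g c) (closure U) :=
  Set.EqOn.closure
    (fun _ hx => (eventuallyEq_affineFun_of_isPreconnected hU h hx₀ h₀ hx).self_of_nhds)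
    hF (continuous_affineFun g c)

lemma exists_eqOn_closure_affineFun (hF : Continuous F) (hU : IsConnected U)
    (h : ∀ x ∈ U, LocallyAffine F x) : ∃ g c, Set.EqOn F (affineFun g c) (closure U) := by
  obtain ⟨x₀, hx₀⟩ := hU.nonempty
  obtain ⟨g, c, h₀⟩ := locallyAffine_iff.1 (h x₀ hx₀)
  exact ⟨g, c, eqOn_closure_affineFun hF hU.isPreconnected h hx₀ h₀⟩

lemma exists_eqOn_closure_intAffineFun (hF : Continuous F) (hU : IsConnected U)
    (h : ∀ x ∈ U, LocallyIntAffine F x) :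
    ∃ g : ℤ × ℤ, ∃ c, Set.EqOn F (affineFun (toR g) c) (closure U) := by
  obtain ⟨x₀, hx₀⟩ := hU.nonempty
  obtain ⟨g, c, h₀⟩ := h x₀ hx₀
  exact ⟨g, c, eqOn_closure_affineFun hF hU.isPreconnected (fun x hx => (h x hx).locallyAffine)
    hx₀ h₀⟩

end Identity

/-! ### Local concavity and tropical polynomials -/

/-- At the last minimum point, midpoint concavity fails unless it is an end point. -/
lemma nonneg_of_eventually_midpoint_le {k : ℝ → ℝ}
    (hk : ContinuousOn k (Set.Icc 0 1)) (hk₀ : k 0 = 0) (hk₁ : k 1 = 0)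
    (h : ∀ t ∈ Set.Ioo (0 : ℝ) 1, ∀ᶠ δ in 𝓝 0, k (t + δ) + k (t - δ) ≤ 2 * k t)
    {t : ℝ} (ht : t ∈ Set.Icc (0 : ℝ) 1) : 0 ≤ k t := by
  obtain ⟨t₁, ht₁, hmin⟩ := isCompact_Icc.exists_isMinOn (Set.nonempty_Icc.2 zero_le_one) hk
  refine le_trans ?_ (hmin ht)
  by_contra! hneg
  have hclosed : IsClosed (Set.Icc (0 : ℝ) 1 ∩ k ⁻¹' {k t₁}) :=
    hk.preimage_isClosed_of_isClosed isClosed_Icc isClosed_singleton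
  obtain ⟨t₀, ⟨ht₀, hkt₀ : k t₀ = k t₁⟩, hlast⟩ :=
    (isCompact_Icc.of_isClosed_subset hclosed Set.inter_subset_left).exists_isGreatest
      ⟨t₁, ht₁, rfl⟩
  have ht₀' : t₀ ∈ Set.Ioo (0 : ℝ) 1 := by
    refine ⟨ht₀.1.lt_of_ne fun h => ?_, ht₀.2.lt_of_ne fun h => ?_⟩
    · rw [← h, hk₀] at hkt₀; exact hneg.ne' hkt₀
    · rw [h, hk₁] at hkt₀; exact hneg.ne' hkt₀
  have hnhds := Icc_mem_nhds ht₀'.1 ht₀'.2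
  have hright : ∀ᶠ δ : ℝ in 𝓝 0, t₀ + δ ∈ Set.Icc (0 : ℝ) 1 :=
    ((continuous_const_add t₀).tendsto' 0 t₀ (add_zero _)).eventually hnhds
  have hleft : ∀ᶠ δ : ℝ in 𝓝 0, t₀ - δ ∈ Set.Icc (0 : ℝ) 1 :=
    ((continuous_sub_left t₀).tendsto' 0 t₀ (sub_zero _)).eventually hnhds
  have hright_nhds : ∀ᶠ δ : ℝ in 𝓝[>] 0, 0 < δ := self_mem_nhdsWithin
  obtain ⟨δ, ⟨hmid, hδr, hδl⟩, hδ⟩ := ((((h t₀ ht₀').and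
    (hright.and hleft)).filter_mono nhdsWithin_le_nhds).and hright_nhds).exists
  have hr : k t₁ ≤ k (t₀ + δ) := hmin hδr
  have hl : k t₁ ≤ k (t₀ - δ) := hmin hδl
  have hkr : k (t₀ + δ) = k t₁ := by linarith
  exact (hlast ⟨hδr, hkr⟩).not_gt (lt_add_of_pos_right _ hδ)

section Concave

variable {E : Type*} [AddCommGroup E] [Module ℝ E] [TopologicalSpace E] [ContinuousAdd E]
  [ContinuousSMul ℝ E] {F : E → ℝ}

lemma le_on_segment_of_eventually_midpoint_le (hF : Continuous F) {x v : E}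
    (h : ∀ t : ℝ, ∀ᶠ δ : ℝ in 𝓝 0,
      F (x + t • v + δ • v) + F (x + t • v - δ • v) ≤ 2 * F (x + t • v))
    {t : ℝ} (ht : t ∈ Set.Icc (0 : ℝ) 1) : (1 - t) * F x + t * F (x + v) ≤ F (x + t • v) := by
  have hnonneg := nonneg_of_eventually_midpoint_le
    (k := fun t => F (x + t • v) - ((1 - t) * F x + t * F (x + v)))
    (by fun_prop) (by simp) (by simp) (fun t _ => ?_) ht
  · exact sub_nonneg.1 hnonneg
  · filter_upwards [h t] with δ hδ
    rw [add_assoc, ← add_smul, add_sub_assoc, ← sub_smul] at hδ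
    linarith

lemma tendsto_add_smul (x v : E) : Tendsto (fun δ : ℝ => x + δ • v) (𝓝 0) (𝓝 x) :=
  Continuous.tendsto' (by fun_prop) 0 x (by simp)

end Concave

lemma eventually_forall_line_notMem {P : Set (ℝ × ℝ)} (hP : P.Finite) (x : ℝ × ℝ)
    {n v : ℝ × ℝ} (hnv : wedge v n ≠ 0) :
    ∀ᶠ s : ℝ in 𝓝[≠] 0, ∀ t : ℝ, x + s • n + t • v ∉ P := by
  have hfin := hP.image fun p => wedge v (p - x) / wedge v n
  filter_upwards [nhdsNE_le_cofinite (a := (0 : ℝ)) hfin.eventually_cofinite_notMem] with s hs t ht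
  refine hs ⟨_, ht, ?_⟩
  have hp : x + s • n + t • v - x = s • n + t • v := by abel
  simp only [hp, map_add, map_smul, wedge_self, smul_eq_mul, mul_zero, add_zero]
  exact mul_div_cancel_right₀ s hnv

/-- A segment through an exceptional point is a limit of parallel segments avoiding `P`. -/
lemma concaveOn_univ_of_eventually_midpoint_le {F : ℝ × ℝ → ℝ} (hF : Continuous F)
    {P : Set (ℝ × ℝ)} (hP : P.Finite)
    (h : ∀ x ∉ P, ∀ v, ∀ᶠ δ : ℝ in 𝓝 0, F (x + δ • v) + F (x - δ • v) ≤ 2 * F x) :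
    ConcaveOn ℝ Set.univ F := by
  refine ⟨convex_univ, fun x _ y _ a b ha hb hab => ?_⟩
  obtain rfl : a = 1 - b := eq_sub_of_add_eq hab
  obtain ⟨v, rfl⟩ : ∃ v, y = x + v := ⟨y - x, by abel⟩
  rcases eq_or_ne v 0 with rfl | hv
  · simp [← add_mul, ← add_smul]
  obtain ⟨n, hn⟩ : ∃ n, wedge v n ≠ 0 := by
    refine ⟨(-v.2, v.1), fun h => hv ?_⟩
    have hsq : v.1 * v.1 + v.2 * v.2 = 0 := by rw [wedge_apply] at h; linarith
    exact Prod.ext (mul_self_add_mul_self_eq_zero.1 hsq).1 (mul_self_add_mul_self_eq_zero.1 hsq).2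
  have htend : ∀ z, Tendsto (fun s : ℝ => F (z + s • n)) (𝓝[≠] 0) (𝓝 (F z)) := fun z =>
    (hF.tendsto z).comp ((tendsto_add_smul z n).mono_left nhdsWithin_le_nhds)
  have hcomb : (1 - b) • x + b • (x + v) = x + b • v := by
    rw [smul_add, ← add_assoc, ← add_smul, sub_add_cancel, one_smul]
  rw [hcomb]
  refine le_of_tendsto_of_tendsto (((htend x).const_mul (1 - b)).add ((htend (x + v)).const_mul b))
    (htend (x + b • v)) ?_
  filter_upwards [eventually_forall_line_notMem hP x hn] with s hs
  rw [add_right_comm x v, add_right_comm x (b • v)]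
  exact le_on_segment_of_eventually_midpoint_le hF (fun t => h _ (hs t) v)
    ⟨hb, sub_nonneg.1 ha⟩

lemma le_affineFun_of_concaveOn {F : ℝ × ℝ → ℝ} (hF : ConcaveOn ℝ Set.univ F) {x : ℝ × ℝ}
    {g : ℝ × ℝ} {c : ℝ} (hx : F x = affineFun g c x) (h : ∀ᶠ y in 𝓝 x, F y ≤ affineFun g c y)
    (y : ℝ × ℝ) : F y ≤ affineFun g c y := by
  have hconv : ConvexOn ℝ Set.univ (affineFun g c) := by
    refine ⟨convex_univ, fun u _ w _ a b _ _ hab => le_of_eq ?_⟩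
    obtain rfl : a = 1 - b := eq_sub_of_add_eq hab
    simp only [affineFun, Prod.fst_add, Prod.snd_add, Prod.smul_fst, Prod.smul_snd, smul_eq_mul]
    ring
  have hmax : IsLocalMax (F - affineFun g c) x := h.mono fun y hy => by
    simpa [hx] using hy
  simpa [hx] using IsMaxOn.of_isLocalMax_of_convex_univ hmax (hF.sub hconv) y

/-- The constant term of each supporting affine function is recovered as a supremum. -/
lemma isTropPoly_of_supporting {F : ℝ × ℝ → ℝ} (hF : Continuous F) {D : Set (ℝ × ℝ)}
    (hD : Dense D) (A : Finset (ℤ × ℤ))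
    (h : ∀ x ∈ D, ∃ g ∈ A, ∃ c, F x = affineFun (toR g) c x ∧ ∀ y, F y ≤ affineFun (toR g) c y) :
    IsTropPoly F := by
  classical
  let gap (g : ℤ × ℤ) (y : ℝ × ℝ) : ℝ := F y - affineFun (toR g) 0 y
  let A' := A.filter fun g => BddAbove (Set.range (gap g))
  have hattained : ∀ x ∈ D, ∃ g ∈ A', F x = affineFun (toR g) (⨆ y, gap g y) x := by
    intro x hx
    obtain ⟨g, hg, c, hxc, hle⟩ := h x hx
    have hmax : IsGreatest (Set.range (gap g)) c := by
      simp only [affineFun] at hxc hle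
      refine ⟨⟨x, by simp only [gap, affineFun]; linarith⟩, ?_⟩
      rintro _ ⟨y, rfl⟩
      simp only [gap, affineFun]; linarith [hle y]
    exact ⟨g, Finset.mem_filter.2 ⟨hg, c, hmax.2⟩, by rw [← sSup_range, hmax.csSup_eq, hxc]⟩
  obtain ⟨x, hx⟩ := hD.nonempty
  obtain ⟨g, hg, -⟩ := hattained x hx
  have hcont : Continuous fun x => A'.inf' ⟨g, hg⟩ fun g => affineFun (toR g) (⨆ y, gap g y) x :=
    Continuous.finset_inf'_apply _ fun g _ => continuous_affineFun _ _
  refine ⟨A', ⟨g, hg⟩, fun g => ⨆ y, gap g y, fun x => ?_⟩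
  refine congrFun (hF.ext_on hD hcont fun x hx => le_antisymm ?_ ?_) x
  · refine Finset.le_inf' _ _ fun g hg => ?_
    have := le_ciSup (Finset.mem_filter.1 hg).2 x
    simp only [gap, affineFun] at this ⊢
    linarith
  · obtain ⟨g, hg, hxg⟩ := hattained x hx
    exact hxg ▸ Finset.inf'_le (fun g => affineFun (toR g) (⨆ y, gap g y) x) hg

/-! ### Creases -/

/-- The standard tropical function bending along the line through `x` in direction `l`. -/
noncomputable def crease (l : ℤ × ℤ) (x y : ℝ × ℝ) : ℝ := min 0 (wedge (toR l) (y - x))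

lemma crease_self (l : ℤ × ℤ) (x : ℝ × ℝ) : crease l x x = 0 := by simp [crease]

lemma crease_nonpos (l : ℤ × ℤ) (x y : ℝ × ℝ) : crease l x y ≤ 0 := min_le_left _ _

lemma continuous_crease (l : ℤ × ℤ) (x : ℝ × ℝ) : Continuous (crease l x) :=
  continuous_const.min ((continuous_wedge _).comp (continuous_id.sub continuous_const))

lemma crease_neg (l : ℤ × ℤ) (x : ℝ × ℝ) :
    crease (-l) x = crease l x - affineFun (toR (rot l)) (-wedge (toR l) x) := by
  funext y
  rw [Pi.sub_apply, crease, crease, toR_neg, min_zero_wedge_neg, wedge_sub_eq_affineFun]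

lemma wedge_sub_eq_of_mem_raySet {r : (ℝ × ℝ) × (ℤ × ℤ)} {x : ℝ × ℝ} (hx : x ∈ raySet r)
    (y : ℝ × ℝ) : wedge (toR r.2) (y - r.1) = wedge (toR r.2) (y - x) := by
  obtain ⟨t, -, rfl⟩ := hx
  rw [← sub_sub, map_sub _ (y - r.1), map_smul, wedge_self, smul_zero, sub_zero]

/-- Creases bend downwards, so `F` is concave and lies below each of its local affine pieces. -/
lemma isTropPoly_of_eventuallyEq_crease {F : ℝ × ℝ → ℝ} (hF : Continuous F) {P : Set (ℝ × ℝ)}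
    (hP : P.Finite) (A : Finset (ℤ × ℤ))
    (h : ∀ x ∉ P, ∃ g ∈ A, ∃ c, ∃ (m : ℕ) (l : ℤ × ℤ),
      F =ᶠ[𝓝 x] affineFun (toR g) c + m • crease l x) : IsTropPoly F := by
  have hconc : ConcaveOn ℝ Set.univ F := by
    refine concaveOn_univ_of_eventually_midpoint_le hF hP fun x hx v => ?_
    obtain ⟨g, -, c, m, l, hFx⟩ := h x hx
    have hneg := tendsto_add_smul x (-v)
    simp only [smul_neg, ← sub_eq_add_neg] at hneg
    filter_upwards [(tendsto_add_smul x v).eventually hFx, hneg.eventually hFx] with δ h₁ h₂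
    have h₁' := mul_nonpos_of_nonneg_of_nonpos m.cast_nonneg (crease_nonpos l x (x + δ • v))
    have h₂' := mul_nonpos_of_nonneg_of_nonpos m.cast_nonneg (crease_nonpos l x (x - δ • v))
    rw [h₁, h₂, hFx.self_of_nhds]
    simp only [Pi.add_apply, nsmul_eq_mul, Pi.mul_apply, Pi.natCast_apply, crease_self, mul_zero,
      affineFun, Prod.fst_add, Prod.snd_add, Prod.fst_sub, Prod.snd_sub]
    linarith
  refine isTropPoly_of_supporting hF (hP.countable.dense_compl ℝ) A fun x hx => ?_
  obtain ⟨g, hg, c, m, l, hFx⟩ := h x hx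
  have hx₀ : F x = affineFun (toR g) c x := by
    simpa [crease_self] using hFx.self_of_nhds
  refine ⟨g, hg, c, hx₀, le_affineFun_of_concaveOn hconc hx₀ (hFx.mono fun y hy => ?_)⟩
  rw [hy, Pi.add_apply, Pi.smul_apply, nsmul_eq_mul]
  exact add_le_of_nonpos_right (mul_nonpos_of_nonneg_of_nonpos m.cast_nonneg (crease_nonpos l x y))

/-! ### Ray chains and their potentials -/

/-- An integral combination of rays, each given by its base point and its direction. A bounded
edge `[p, q]` is the ray from `p` through `q` minus its part beyond `q`. -/
abbrev RayChain : Type := ((ℝ × ℝ) × (ℤ × ℤ)) →₀ ℤ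

/-- The weighted sum of the directions of the rays issuing from each point; it vanishes exactly
when the balancing condition holds everywhere. -/
noncomputable def divergence : RayChain →ₗ[ℤ] (ℝ × ℝ) →₀ (ℤ × ℤ) :=
  Finsupp.linearCombination ℤ fun r => Finsupp.single r.1 r.2

/-- The weighted sum of the ray potentials, a function bending along the chain. -/
noncomputable def potential : RayChain →ₗ[ℤ] ℝ × ℝ → ℝ :=
  Finsupp.linearCombination ℤ fun r x => rayPotential r.2 (x - r.1)

open Classical in
/-- The weighted sum of the creases at `x₀` of the rays through `x₀`. -/
noncomputable def kinks (x₀ : ℝ × ℝ) : RayChain →ₗ[ℤ] ℝ × ℝ → ℝ :=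
  Finsupp.linearCombination ℤ fun r => if x₀ ∈ raySet r then crease r.2 x₀ else 0

/-- The finitely many integral gradients which the potential of a chain can have. -/
def gradients (σ : RayChain) : Finset (ℤ × ℤ) :=
  σ.support.powerset.image fun s => ∑ r ∈ s, σ r • rot r.2

lemma linearCombination_eq_zero_of_divergence_eq_zero {M : Type*} [AddCommGroup M]
    (f : ℝ × ℝ → ℤ × ℤ →ₗ[ℤ] M) {σ : RayChain} (hσ : divergence σ = 0) :
    Finsupp.linearCombination ℤ (fun r => f r.1 r.2) σ = 0 := by
  have hfactor : Finsupp.linearCombination ℤ (fun r : (ℝ × ℝ) × (ℤ × ℤ) => f r.1 r.2) =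
      Finsupp.lsum ℤ f ∘ₗ divergence := by
    ext r; simp [divergence]
  rw [hfactor, LinearMap.comp_apply, hσ, map_zero]

open Classical in
/-- The part of the potential of `r` near `x₀` which jumps across the negative horizontal ray
issuing from the base point. -/
noncomputable def rayJump (x₀ x : ℝ × ℝ) (r : (ℝ × ℝ) × (ℤ × ℤ)) : ℝ :=
  if x₀ - r.1 ∈ cutAxis ∧ (x - r.1).2 < 0 then wedge (toR r.2) (x - r.1) else 0

lemma linearCombination_rayJump {σ : RayChain} (hσ : divergence σ = 0) (x₀ x : ℝ × ℝ) :
    Finsupp.linearCombination ℤ (rayJump x₀ x) σ = 0 := by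
  classical
  have hlinear := linearCombination_eq_zero_of_divergence_eq_zero (fun p =>
    if x₀ - p ∈ cutAxis ∧ (x - p).2 < 0 then
      (wedge.flip (x - p)).restrictScalars ℤ ∘ₗ toRHom else 0) hσ
  refine Eq.trans ?_ hlinear
  congr 2
  funext r
  unfold rayJump
  split_ifs <;> rfl

lemma potential_apply_eq_sum {σ : RayChain} (hσ : divergence σ = 0) (x₀ x : ℝ × ℝ) :
    potential σ x = ∑ r ∈ σ.support, σ r * (rayPotential r.2 (x - r.1) - rayJump x₀ x r) := by
  have hjump := linearCombination_rayJump hσ x₀ x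
  simp only [Finsupp.linearCombination_apply, Finsupp.sum, zsmul_eq_mul] at hjump
  simp only [mul_sub, Finset.sum_sub_distrib, hjump, sub_zero, potential,
    Finsupp.linearCombination_apply, Finsupp.sum, Finset.sum_apply, zsmul_eq_mul,
    Pi.mul_apply, Pi.intCast_apply]

open Classical in
lemma rayPotential_sub_rayJump_eventuallyEq {r : (ℝ × ℝ) × (ℤ × ℤ)} (hr : r.2 ≠ 0)
    {x₀ : ℝ × ℝ} (hx₀ : r.1 ≠ x₀) :
    (fun x => rayPotential r.2 (x - r.1) - rayJump x₀ x r) =ᶠ[𝓝 x₀] fun x =>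
      (if angle (x₀ - r.1) < angle (toR r.2) then
        affineFun (toR (rot r.2)) (-wedge (toR r.2) r.1) x else 0) +
        if x₀ ∈ raySet r then crease r.2 x₀ x else 0 := by
  have hmem : x₀ - r.1 ∈ raySet (0, r.2) ↔ x₀ ∈ raySet r := by
    simp [raySet, sub_eq_iff_eq_add']
  have htend : Tendsto (fun x => x - r.1) (𝓝 x₀) (𝓝 (x₀ - r.1)) :=
    (continuous_sub_right r.1).tendsto x₀
  filter_upwards [htend.eventually
    (rayPotential_eventuallyEq hr (sub_ne_zero.2 hx₀.symm))] with x hx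
  rw [hx, hmem, rayJump, add_assoc, add_sub_cancel_left, wedge_sub_eq_affineFun]
  congr 1
  split_ifs with hray
  · rw [← wedge_sub_eq_affineFun, wedge_sub_eq_of_mem_raySet hray, crease]
  · rfl

lemma continuousAt_rayPotential_sub_rayJump {r : (ℝ × ℝ) × (ℤ × ℤ)} (hr : r.2 ≠ 0)
    (x₀ : ℝ × ℝ) : ContinuousAt (fun x => rayPotential r.2 (x - r.1) - rayJump x₀ x r) x₀ := by
  classical
  rcases eq_or_ne r.1 x₀ with rfl | hx₀
  · have hcut : (0 : ℝ × ℝ) ∉ cutAxis := fun h => lt_irrefl _ h.1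
    simp only [rayJump, sub_self, hcut, false_and, if_false, sub_zero]
    exact ContinuousAt.comp (f := fun x => x - r.1) (g := rayPotential r.2)
      (by rw [sub_self]; exact continuousAt_rayPotential_zero r.2)
      (continuous_sub_right r.1).continuousAt
  · refine ContinuousAt.congr_of_eventuallyEq ?_ (rayPotential_sub_rayJump_eventuallyEq hr hx₀)
    refine ContinuousAt.add ?_ ?_ <;> split_ifs
    · exact (continuous_affineFun _ _).continuousAt
    · exact continuousAt_const
    · exact (continuous_crease _ _).continuousAt
    · exact continuousAt_const

theorem continuous_potential {σ : RayChain} (hσ : divergence σ = 0)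
    (hdir : ∀ r ∈ σ.support, r.2 ≠ 0) : Continuous (potential σ) := by
  refine continuous_iff_continuousAt.2 fun x₀ => ?_
  rw [funext (potential_apply_eq_sum hσ x₀)]
  exact tendsto_finsetSum _ fun r hr =>
    (continuousAt_rayPotential_sub_rayJump (hdir r hr) x₀).const_mul _

lemma sum_zsmul_affineFun {ι : Type*} (s : Finset ι) (n : ι → ℤ) (g : ι → ℤ × ℤ) (c : ι → ℝ)
    (x : ℝ × ℝ) : ∑ i ∈ s, n i * affineFun (toR (g i)) (c i) x =
      affineFun (toR (∑ i ∈ s, n i • g i)) (∑ i ∈ s, n i * c i) x := by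
  simp only [toR_sum, toR_zsmul, affineFun, Prod.fst_sum, Prod.snd_sum, Prod.smul_fst,
    Prod.smul_snd, smul_eq_mul, mul_add, Finset.sum_add_distrib, Finset.sum_mul, mul_assoc]

theorem potential_eventuallyEq {σ : RayChain} (hσ : divergence σ = 0)
    (hdir : ∀ r ∈ σ.support, r.2 ≠ 0) {x₀ : ℝ × ℝ} (hx₀ : ∀ r ∈ σ.support, r.1 ≠ x₀) :
    ∃ g ∈ gradients σ, ∃ c, potential σ =ᶠ[𝓝 x₀] affineFun (toR g) c + kinks x₀ σ := by
  classical
  let s := σ.support.filter fun r => angle (x₀ - r.1) < angle (toR r.2)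
  refine ⟨∑ r ∈ s, σ r • rot r.2,
    Finset.mem_image_of_mem _ (Finset.mem_powerset.2 (Finset.filter_subset _ _)),
    ∑ r ∈ s, σ r * -wedge (toR r.2) r.1, ?_⟩
  filter_upwards [(Filter.eventually_all_finset σ.support).2 fun r hr =>
    rayPotential_sub_rayJump_eventuallyEq (hdir r hr) (hx₀ r hr)] with x hx
  rw [potential_apply_eq_sum hσ x₀, Finset.sum_congr rfl fun r hr => by rw [hx r hr]]
  simp only [mul_add, Finset.sum_add_distrib, mul_ite, mul_zero]
  rw [Pi.add_apply, ← sum_zsmul_affineFun, Finset.sum_filter]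
  congr 1
  simp only [kinks, Finsupp.linearCombination_apply, Finsupp.sum, Finset.sum_apply, zsmul_eq_mul,
    Pi.mul_apply, Pi.intCast_apply]
  refine Finset.sum_congr rfl fun r _ => ?_
  split_ifs
  · rfl
  · rw [Pi.zero_apply, mul_zero]

/-! ### Primitive directions -/

lemma ne_zero_of_gcd_eq_one {l : ℤ × ℤ} (h : Int.gcd l.1 l.2 = 1) : l ≠ 0 := by
  rintro rfl; simp at h

lemma exists_zsmul_eq_of_wedge_eq_zero {k l : ℤ × ℤ} (hl : Int.gcd l.1 l.2 = 1)
    (h : wedge (toR k) (toR l) = 0) : ∃ n : ℤ, k = n • l := by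
  obtain ⟨u, v, huv⟩ := Int.isCoprime_iff_gcd_eq_one.2 hl
  have hdet : k.1 * l.2 - k.2 * l.1 = 0 := by
    simp only [wedge_apply, toR] at h
    exact_mod_cast h
  refine ⟨u * k.1 + v * k.2, Prod.ext ?_ ?_⟩ <;>
    simp only [Prod.smul_fst, Prod.smul_snd, smul_eq_mul]
  · linear_combination -k.1 * huv + v * hdet
  · linear_combination -k.2 * huv - u * hdet

lemma eq_or_eq_neg_of_wedge_eq_zero {k l : ℤ × ℤ} (hk : Int.gcd k.1 k.2 = 1)
    (hl : Int.gcd l.1 l.2 = 1) (h : wedge (toR k) (toR l) = 0) : k = l ∨ k = -l := by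
  obtain ⟨n, rfl⟩ := exists_zsmul_eq_of_wedge_eq_zero hl h
  have hn : n.natAbs = 1 := by
    simpa [Int.gcd_mul_left, hl] using hk
  rcases Int.natAbs_eq_iff.1 hn with rfl | rfl <;> simp

lemma PrimOut.unique {d : ℝ × ℝ} {k l : ℤ × ℤ} (hk : PrimOut d k) (hl : PrimOut d l) : k = l := by
  obtain ⟨hk, s, hs, rfl⟩ := hk
  obtain ⟨hl, t, ht, hst⟩ := hl
  have hkl : toR k = (s⁻¹ * t) • toR l := by rw [mul_smul, ← hst, inv_smul_smul₀ hs.ne']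
  rcases eq_or_eq_neg_of_wedge_eq_zero hk hl
    (by rw [hkl, map_smul, LinearMap.smul_apply, wedge_self, smul_zero]) with h | rfl
  · exact h
  · rw [toR_neg, neg_eq_iff_add_eq_zero, ← one_smul ℝ (toR l), smul_smul, ← add_smul] at hkl
    have hpos : 0 < 1 + s⁻¹ * t * 1 := by positivity
    exact absurd (smul_eq_zero.1 hkl)
      (not_or_intro hpos.ne' (toR_ne_zero (ne_zero_of_gcd_eq_one hl)))

lemma primOut_prim {d : ℝ × ℝ} (h : RatDir d) : PrimOut d (prim d) := by
  have hprim : prim d = Exists.choose h := dif_pos h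
  rw [hprim]
  exact Exists.choose_spec h

lemma prim_ne_zero {d : ℝ × ℝ} (h : RatDir d) : prim d ≠ 0 :=
  ne_zero_of_gcd_eq_one (primOut_prim h).1

lemma PrimOut.neg {d : ℝ × ℝ} {l : ℤ × ℤ} (h : PrimOut d l) : PrimOut (-d) (-l) := by
  obtain ⟨hl, t, ht, rfl⟩ := h
  exact ⟨by simpa using hl, t, ht, by rw [toR_neg, smul_neg]⟩

lemma prim_neg {d : ℝ × ℝ} (h : RatDir d) : prim (-d) = -prim d :=
  (primOut_prim ⟨_, (primOut_prim h).neg⟩).unique (primOut_prim h).neg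

lemma ratDir_toR {a : ℤ × ℤ} (h : a ≠ 0) : RatDir (toR a) := by
  have hgcd : 0 < Int.gcd a.1 a.2 := by
    rw [Int.gcd_pos_iff]
    contrapose! h
    exact Prod.ext h.1 h.2
  obtain ⟨p, q, hpq, hp, hq⟩ := Int.exists_gcd_one hgcd
  have ha : a = (Int.gcd a.1 a.2 : ℤ) • (p, q) :=
    Prod.ext (hp.trans (mul_comm _ _)) (hq.trans (mul_comm _ _))
  refine ⟨(p, q), hpq, (Int.gcd a.1 a.2 : ℤ), by exact_mod_cast hgcd, ?_⟩
  rw [← toR_zsmul, ← ha]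

/-! ### Chains of weighted graphs -/

lemma add_smul_mem_raySet_iff {l : ℤ × ℤ} (hl : l ≠ 0) (p : ℝ × ℝ) {s t : ℝ} :
    p + s • toR l ∈ raySet (p + t • toR l, l) ↔ t ≤ s := by
  constructor
  · rintro ⟨u, hu, h⟩
    rw [add_assoc, ← add_smul, add_right_inj] at h
    rw [smul_left_injective ℝ (toR_ne_zero hl) h]
    exact le_add_of_nonneg_right hu
  · intro h
    exact ⟨s - t, sub_nonneg.2 h, by rw [add_assoc, ← add_smul, add_sub_cancel]⟩

lemma seg_eq_image {e : Seg} {l : ℤ × ℤ} {t : ℝ} (ht : 0 < t) (h : e.2 - e.1 = t • toR l) :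
    seg e = (fun s : ℝ => e.1 + s • toR l) '' Set.Icc 0 t := by
  rw [seg, segment_eq_image', h]
  refine Set.Subset.antisymm ?_ ?_
  · rintro _ ⟨s, hs, rfl⟩
    exact ⟨s * t, ⟨mul_nonneg hs.1 ht.le, mul_le_of_le_one_left ht.le hs.2⟩,
      by simp only [mul_smul]⟩
  · rintro _ ⟨s, hs, rfl⟩
    refine ⟨s / t, ⟨div_nonneg hs.1 ht.le, (div_le_one ht).2 hs.2⟩, ?_⟩
    simp only [smul_smul, div_mul_cancel₀ s ht.ne']

lemma mem_seg_iff_mem_raySet {e : Seg} {l : ℤ × ℤ} (he : PrimOut (e.2 - e.1) l) {x : ℝ × ℝ}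
    (hx : x ≠ e.2) : x ∈ seg e ↔ x ∈ raySet (e.1, l) ∧ x ∉ raySet (e.2, l) := by
  obtain ⟨hl, t, ht, hd⟩ := he
  obtain ⟨p, q⟩ := e
  obtain rfl : q = p + t • toR l := eq_add_of_sub_eq' hd
  have hmem (s : ℝ) := add_smul_mem_raySet_iff (ne_zero_of_gcd_eq_one hl) p (s := s) (t := t)
  rw [seg_eq_image ht hd]
  constructor
  · rintro ⟨s, hs, rfl⟩
    refine ⟨⟨s, hs.1, rfl⟩, fun h => hx ?_⟩
    simp only [le_antisymm hs.2 ((hmem s).1 h)]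
  · rintro ⟨⟨s, hs, rfl⟩, h⟩
    exact ⟨s, ⟨hs, (not_le.1 (mt (hmem s).2 h)).le⟩, rfl⟩

/-- The chain of a bounded edge. -/
noncomputable def segChain (e : Seg) : RayChain :=
  Finsupp.single (e.1, prim (e.2 - e.1)) 1 - Finsupp.single (e.2, prim (e.2 - e.1)) 1

/-- The chain of a finite set of bounded edges with integer weights. -/
noncomputable def graphChain (E : Finset Seg) (w : Seg → ℤ) : RayChain :=
  ∑ e ∈ E, w e • segChain e

lemma divergence_segChain (e : Seg) : divergence (segChain e) =
    Finsupp.single e.1 (prim (e.2 - e.1)) - Finsupp.single e.2 (prim (e.2 - e.1)) := by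
  simp only [segChain, divergence, map_sub, Finsupp.linearCombination_single, one_smul]

lemma divergence_graphChain_apply (E : Finset Seg) (w : Seg → ℤ) (p : ℝ × ℝ) :
    divergence (graphChain E w) p = (∑ e ∈ E with e.1 = p, w e • prim (e.2 - e.1)) -
      ∑ e ∈ E with e.2 = p, w e • prim (e.2 - e.1) := by
  classical
  simp only [graphChain, map_sum, map_smul, divergence_segChain, Finsupp.finsetSum_apply,
    Finsupp.smul_apply, Finsupp.sub_apply, smul_sub, Finset.sum_sub_distrib,
    Finsupp.single_apply, smul_ite, smul_zero, Finset.sum_filter]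

lemma kinks_single (x : ℝ × ℝ) (r : (ℝ × ℝ) × (ℤ × ℤ)) [Decidable (x ∈ raySet r)] :
    kinks x (Finsupp.single r 1) = if x ∈ raySet r then crease r.2 x else 0 := by
  rw [kinks, Finsupp.linearCombination_single, one_smul]
  congr

open Classical in
lemma kinks_segChain {e : Seg} (he : RatDir (e.2 - e.1)) {x : ℝ × ℝ} (hx : x ≠ e.2) :
    kinks x (segChain e) = if x ∈ seg e then crease (prim (e.2 - e.1)) x else 0 := by
  have hout := primOut_prim he
  rw [segChain, map_sub, kinks_single, kinks_single, mem_seg_iff_mem_raySet hout hx]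
  have hsub : x ∈ raySet (e.2, prim (e.2 - e.1)) → x ∈ raySet (e.1, prim (e.2 - e.1)) := by
    rintro ⟨s, hs, h⟩
    obtain ⟨-, t, ht, hd⟩ := hout
    refine ⟨t + s, by positivity, h.trans ?_⟩
    rw [add_smul, ← hd, ← add_assoc, add_sub_cancel]
  by_cases hx₂ : x ∈ raySet (e.2, prim (e.2 - e.1))
  · simp only [hsub hx₂, hx₂, if_true, sub_self, not_true_eq_false, and_false, if_false]
  · simp only [hx₂, if_false, sub_zero, not_false_eq_true, and_true]

/-! ### Weighted planar graphs and functions bending along them -/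

section

/-- A weighted planar graph with bounded and unbounded edges of rational slope: a plane tropical
curve without the balancing condition. -/
structure IsPlanarGraph (C : PlaneTropData) : Prop where
  seg_pos : ∀ e ∈ C.segs, 0 < C.msegs e
  seg_ratDir : ∀ e ∈ C.segs, RatDir (e.2 - e.1)
  ray_pos : ∀ r ∈ C.rays, 0 < C.mrays r
  ray_gcd : ∀ r ∈ C.rays, Int.gcd r.2.1 r.2.2 = 1
  seg_inter_seg : ∀ e ∈ C.segs, ∀ e' ∈ C.segs, e ≠ e' →
    seg e ∩ seg e' ⊆ ({e.1, e.2} : Set (ℝ × ℝ)) ∩ {e'.1, e'.2}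
  seg_inter_ray : ∀ e ∈ C.segs, ∀ r ∈ C.rays,
    seg e ∩ raySet r ⊆ ({e.1, e.2} : Set (ℝ × ℝ)) ∩ {r.1}
  ray_inter_ray : ∀ r ∈ C.rays, ∀ r' ∈ C.rays, r ≠ r' →
    raySet r ∩ raySet r' ⊆ ({r.1} : Set (ℝ × ℝ)) ∩ {r'.1}

lemma IsPlaneTropCurve.isPlanarGraph {C : PlaneTropData} (hC : IsPlaneTropCurve C) :
    IsPlanarGraph C :=
  let ⟨_, hsegs, hrays, hss, hsr, hrr, _⟩ := hC
  ⟨fun e he => (hsegs e he).1, fun e he => (hsegs e he).2, fun r hr => (hrays r hr).1,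
    fun r hr => (hrays r hr).2, hss, hsr, hrr⟩

/-- `x` lies in the relative interior of an edge of `C` of direction `l` and weight `m`. -/
inductive OnEdge (C : PlaneTropData) (x : ℝ × ℝ) : ℤ × ℤ → ℕ → Prop
  | seg {e : Seg} (he : e ∈ C.segs) (hx : x ∈ seg e) (hx₁ : x ≠ e.1) (hx₂ : x ≠ e.2) :
    OnEdge C x (prim (e.2 - e.1)) (C.msegs e)
  | ray {r : (ℝ × ℝ) × (ℤ × ℤ)} (hr : r ∈ C.rays) (hx : x ∈ raySet r) (hx₁ : x ≠ r.1) :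
    OnEdge C x r.2 (C.mrays r)

/-- The chain of all edges of a weighted graph. -/
noncomputable def PlaneTropData.chain (C : PlaneTropData) : RayChain :=
  graphChain C.segs (fun e => C.msegs e) + ∑ r ∈ C.rays, (C.mrays r : ℤ) • Finsupp.single r 1

variable {C : PlaneTropData} {x : ℝ × ℝ}

lemma mem_ptcSupp_iff :
    x ∈ ptcSupp C ↔ (∃ e ∈ C.segs, x ∈ seg e) ∨ ∃ r ∈ C.rays, x ∈ raySet r := by
  simp only [ptcSupp, Set.mem_union, Set.mem_iUnion, exists_prop]

lemma self_mem_raySet (r : (ℝ × ℝ) × (ℤ × ℤ)) : r.1 ∈ raySet r := ⟨0, le_rfl, by simp⟩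

lemma ptcVert.mem_ptcSupp (h : ptcVert C x) : x ∈ ptcSupp C := by
  rw [mem_ptcSupp_iff]
  rcases h with ⟨e, he, rfl | rfl⟩ | ⟨r, hr, rfl⟩
  · exact .inl ⟨e, he, left_mem_segment ℝ _ _⟩
  · exact .inl ⟨e, he, right_mem_segment ℝ _ _⟩
  · exact .inr ⟨r, hr, self_mem_raySet r⟩

lemma finite_setOf_ptcVert (C : PlaneTropData) : {v | ptcVert C v}.Finite := by
  refine ((C.segs.image Prod.fst ∪ C.segs.image Prod.snd ∪ C.rays.image Prod.fst).finite_toSet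
    ).subset ?_
  rintro v (⟨e, he, rfl | rfl⟩ | ⟨r, hr, rfl⟩) <;>
    simp only [Finset.coe_union, Finset.coe_image, Set.mem_union]
  · exact .inl (.inl ⟨e, he, rfl⟩)
  · exact .inl (.inr ⟨e, he, rfl⟩)
  · exact .inr ⟨r, hr, rfl⟩

lemma exists_onEdge (hx : x ∈ ptcSupp C) (hv : ¬ ptcVert C x) : ∃ l m, OnEdge C x l m := by
  rcases mem_ptcSupp_iff.1 hx with ⟨e, he, hxe⟩ | ⟨r, hr, hxr⟩
  · exact ⟨_, _, .seg he hxe (fun h => hv (.inl ⟨e, he, .inl h.symm⟩))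
      fun h => hv (.inl ⟨e, he, .inr h.symm⟩)⟩
  · exact ⟨_, _, .ray hr hxr fun h => hv (.inr ⟨r, hr, h.symm⟩)⟩

lemma RatDir.ne_zero {d : ℝ × ℝ} (hd : RatDir d) : d ≠ 0 := by
  obtain ⟨l, hl, t, ht, rfl⟩ := hd
  exact smul_ne_zero ht.ne' (toR_ne_zero (ne_zero_of_gcd_eq_one hl))

lemma divergence_graphChain {E : Finset Seg} (hE : ∀ e ∈ E, RatDir (e.2 - e.1)) (m : Seg → ℕ)
    (v : ℝ × ℝ) : divergence (graphChain E fun e => m e) v = balSum E m v := by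
  classical
  have hdisj : Disjoint (E.filter fun e => e.1 = v) (E.filter fun e => e.2 = v) :=
    Finset.disjoint_filter.2 fun e he h₁ h₂ => (hE e he).ne_zero (by rw [h₁, h₂, sub_self])
  rw [divergence_graphChain_apply, balSum, Finset.filter_or, Finset.sum_union hdisj,
    sub_eq_add_neg, ← Finset.sum_neg_distrib]
  congr 1 <;> refine Finset.sum_congr rfl fun e he => ?_ <;>
    obtain ⟨heE, rfl⟩ := Finset.mem_filter.1 he
  · rw [outDir, if_pos rfl]
  · rw [outDir, if_neg (sub_ne_zero.1 (hE e heE).ne_zero).symm, ← neg_sub e.2, prim_neg (hE e heE),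
      smul_neg]

lemma ptcBalSum_eq_zero_of_not_ptcVert (hv : ¬ ptcVert C x) : ptcBalSum C x = 0 := by
  rw [ptcBalSum, balSum, Finset.filter_eq_empty_iff.2 fun e he h => hv (.inl ⟨e, he, h⟩),
    Finset.filter_eq_empty_iff.2 fun r hr h => hv (.inr ⟨r, hr, h⟩), Finset.sum_empty,
    Finset.sum_empty, add_zero]

namespace IsPlanarGraph

variable (hC : IsPlanarGraph C)
include hC

lemma divergence_chain (v : ℝ × ℝ) : divergence C.chain v = ptcBalSum C v := by
  classical
  rw [PlaneTropData.chain, map_add, Finsupp.add_apply, divergence_graphChain hC.seg_ratDir,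
    ptcBalSum, map_sum]
  simp only [map_smul, divergence, Finsupp.linearCombination_single, one_smul,
    Finsupp.finsetSum_apply, Finsupp.smul_apply, Finsupp.single_apply, smul_ite, smul_zero,
    Finset.sum_filter]

lemma not_ptcVert_of_onEdge {l : ℤ × ℤ} {m : ℕ} (h : OnEdge C x l m) : ¬ ptcVert C x := by
  rintro (⟨e', he', hv⟩ | ⟨r', hr', rfl⟩)
  · have hx' : x ∈ seg e' := by
      rcases hv with rfl | rfl
      exacts [left_mem_segment ℝ _ _, right_mem_segment ℝ _ _]
    cases h with
    | @seg e he hx hx₁ hx₂ =>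
      have hne : e ≠ e' := by rintro rfl; exact hv.elim hx₁.symm hx₂.symm
      exact (hC.seg_inter_seg e he e' he' hne ⟨hx, hx'⟩).1.elim hx₁ hx₂
    | ray hr hx hx₁ => exact hx₁ (hC.seg_inter_ray e' he' _ hr ⟨hx', hx⟩).2
  · have hx' := self_mem_raySet r'
    cases h with
    | seg he hx hx₁ hx₂ => exact (hC.seg_inter_ray _ he r' hr' ⟨hx, hx'⟩).1.elim hx₁ hx₂
    | @ray r hr hx hx₁ =>
      have hne : r ≠ r' := by rintro rfl; exact hx₁ rfl
      exact hx₁ (hC.ray_inter_ray r hr r' hr' hne ⟨hx, hx'⟩).1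

lemma gcd_eq_one_of_onEdge {l : ℤ × ℤ} {m : ℕ} (h : OnEdge C x l m) : Int.gcd l.1 l.2 = 1 := by
  cases h with
  | seg he => exact (primOut_prim (hC.seg_ratDir _ he)).1
  | ray hr => exact hC.ray_gcd _ hr

lemma weight_pos_of_onEdge {l : ℤ × ℤ} {m : ℕ} (h : OnEdge C x l m) : 0 < m := by
  cases h with
  | seg he => exact hC.seg_pos _ he
  | ray hr => exact hC.ray_pos _ hr

open Classical in
lemma kinks_chain (hv : ¬ ptcVert C x) : kinks x C.chain =
    (∑ e ∈ C.segs, if x ∈ seg e then C.msegs e • crease (prim (e.2 - e.1)) x else 0) +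
      ∑ r ∈ C.rays, if x ∈ raySet r then C.mrays r • crease r.2 x else 0 := by
  rw [PlaneTropData.chain, graphChain, map_add, map_sum, map_sum]
  congr 1 <;> refine Finset.sum_congr rfl fun e he => ?_
  · rw [map_smul, kinks_segChain (hC.seg_ratDir e he) fun h => hv (.inl ⟨e, he, .inr h.symm⟩)]
    simp only [natCast_zsmul, smul_ite, smul_zero]
  · rw [map_smul, kinks_single]
    simp only [natCast_zsmul, smul_ite, smul_zero]

lemma kinks_chain_of_notMem (hx : x ∉ ptcSupp C) : kinks x C.chain = 0 := by
  rw [hC.kinks_chain fun h => hx h.mem_ptcSupp,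
    Finset.sum_eq_zero fun e he => if_neg fun h => hx (mem_ptcSupp_iff.2 (.inl ⟨e, he, h⟩)),
    Finset.sum_eq_zero fun r hr => if_neg fun h => hx (mem_ptcSupp_iff.2 (.inr ⟨r, hr, h⟩)),
    add_zero]

lemma kinks_chain_of_onEdge {l : ℤ × ℤ} {m : ℕ} (h : OnEdge C x l m) :
    kinks x C.chain = m • crease l x := by
  rw [hC.kinks_chain (hC.not_ptcVert_of_onEdge h)]
  cases h with
  | @seg e he hx hx₁ hx₂ =>
    rw [Finset.sum_eq_single_of_mem e he fun e' he' hne => if_neg fun hx' =>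
        (hC.seg_inter_seg e he e' he' hne.symm ⟨hx, hx'⟩).1.elim hx₁ hx₂,
      Finset.sum_eq_zero fun r hr => if_neg fun hx' =>
        (hC.seg_inter_ray e he r hr ⟨hx, hx'⟩).1.elim hx₁ hx₂, if_pos hx, add_zero]
  | @ray r hr hx hx₁ =>
    rw [Finset.sum_eq_zero fun e he => if_neg fun hx' =>
        hx₁ (hC.seg_inter_ray e he r hr ⟨hx', hx⟩).2,
      Finset.sum_eq_single_of_mem r hr fun r' hr' hne => if_neg fun hx' =>
        hx₁ (hC.ray_inter_ray r hr r' hr' hne.symm ⟨hx, hx'⟩).1, if_pos hx, zero_add]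

lemma exists_kinks_chain_eq (hv : ¬ ptcVert C x) :
    ∃ (m : ℕ) (l : ℤ × ℤ), kinks x C.chain = m • crease l x := by
  by_cases hx : x ∈ ptcSupp C
  · obtain ⟨l, m, h⟩ := exists_onEdge hx hv
    exact ⟨m, l, hC.kinks_chain_of_onEdge h⟩
  · exact ⟨0, 0, by rw [hC.kinks_chain_of_notMem hx, zero_smul]⟩

lemma chain_mem_supported :
    C.chain ∈ Finsupp.supported ℤ ℤ {r | ptcVert C r.1 ∧ r.2 ≠ 0} := by
  refine add_mem (sum_mem fun e he => ?_) (sum_mem fun r hr => ?_)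
  · have hdir := prim_ne_zero (hC.seg_ratDir e he)
    exact Submodule.smul_mem _ _ (sub_mem
      (Finsupp.single_mem_supported ℤ 1 ⟨.inl ⟨e, he, .inl rfl⟩, hdir⟩)
      (Finsupp.single_mem_supported ℤ 1 ⟨.inl ⟨e, he, .inr rfl⟩, hdir⟩))
  · exact Submodule.smul_mem _ _ (Finsupp.single_mem_supported ℤ 1
      ⟨.inr ⟨r, hr, rfl⟩, ne_zero_of_gcd_eq_one (hC.ray_gcd r hr)⟩)

end IsPlanarGraph

lemma IsPlaneTropCurve.divergence_chain (hC : IsPlaneTropCurve C) : divergence C.chain = 0 := by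
  ext1 v
  rw [hC.isPlanarGraph.divergence_chain, Finsupp.zero_apply]
  by_cases hv : ptcVert C v
  · exact hC.2.2.2.2.2.2 v hv
  · exact ptcBalSum_eq_zero_of_not_ptcVert hv

end

/-! ### Corner loci -/

section

/-- Away from the vertices, `F` bends along the edges of `C` and nowhere else, with the weights
of `C`. -/
def BendsAlong (F : ℝ × ℝ → ℝ) (C : PlaneTropData) : Prop :=
  ∀ x, ¬ ptcVert C x → LocallyAffine (F - kinks x C.chain) x

variable {F : ℝ × ℝ → ℝ} {C : PlaneTropData} {x : ℝ × ℝ} {l : ℤ × ℤ} {m : ℕ}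

lemma isClosed_cornerLocus (F : ℝ × ℝ → ℝ) : IsClosed (cornerLocus F) := by
  have hcompl : cornerLocus F = {x | LocallyAffine F x}ᶜ := rfl
  rw [hcompl, isClosed_compl_iff, isOpen_iff_mem_nhds]
  intro x hx
  obtain ⟨g, c, hg⟩ := locallyAffine_iff.1 hx
  filter_upwards [eventually_eventually_nhds.2 hg] with y hy
  exact locallyAffine_iff.2 ⟨g, c, hy⟩

lemma affineFun_add_nsmul_crease (g : ℝ × ℝ) (c : ℝ) (m : ℕ) (l : ℤ × ℤ) (x y : ℝ × ℝ) :
    (affineFun g c + m • crease l x) y =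
      min (affineFun (g + (m : ℝ) • toR (rot l)) (c - m * wedge (toR l) x) y)
        (affineFun g c y) := by
  have hw : affineFun (g + (m : ℝ) • toR (rot l)) (c - m * wedge (toR l) x) y =
      affineFun g c y + m * wedge (toR l) (y - x) := by
    rw [wedge_sub_eq_affineFun]
    simp only [affineFun, Prod.fst_add, Prod.snd_add, Prod.smul_fst, Prod.smul_snd, smul_eq_mul]
    ring
  rw [hw, Pi.add_apply, Pi.smul_apply, nsmul_eq_mul, crease,
    mul_min_of_nonneg _ _ m.cast_nonneg, mul_zero, ← min_add_add_left, add_zero, min_comm]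

lemma EdgeWeightIs.of_locallyAffine (h : LocallyAffine (F - m • crease l x) x) :
    EdgeWeightIs F x l m := by
  obtain ⟨g, c, hg⟩ := locallyAffine_iff.1 h
  refine ⟨_, hg, g + (m : ℝ) • toR (rot l), g, c - m * wedge (toR l) x, c,
    add_sub_cancel_left _ _, fun y hy => ?_⟩
  refine Eq.trans ?_ (affineFun_add_nsmul_crease g c m l x y)
  exact sub_eq_iff_eq_add.1 hy

lemma EdgeWeightIs.locallyAffine_sub (h : EdgeWeightIs F x l m) (hx : x ∈ cornerLocus F) :
    LocallyAffine (F - m • crease l x) x := by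
  obtain ⟨U, hU, g₁, g₂, c₁, c₂, hg, hF⟩ := h
  have hFmin : F =ᶠ[𝓝 x] fun y => min (affineFun g₁ c₁ y) (affineFun g₂ c₂ y) :=
    mem_of_superset hU hF
  have hcont₁ := (continuous_affineFun g₁ c₁).continuousAt (x := x)
  have hcont₂ := (continuous_affineFun g₂ c₂).continuousAt (x := x)
  rcases lt_trichotomy (affineFun g₁ c₁ x) (affineFun g₂ c₂ x) with hlt | heq | hgt
  · refine absurd (locallyAffine_iff.2 ⟨g₁, c₁, ?_⟩) hx
    filter_upwards [hFmin, hcont₁.eventually_lt hcont₂ hlt] with y hy hlt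
    rw [hy, min_eq_left hlt.le]
  · refine locallyAffine_iff.2 ⟨g₂, c₂, hFmin.mono fun y hy => ?_⟩
    obtain rfl : g₁ = g₂ + (m : ℝ) • toR (rot l) := sub_eq_iff_eq_add'.1 hg
    have hc : c₁ = c₂ - m * wedge (toR l) x := by
      simp only [affineFun, wedge_apply, toR, rot, Prod.fst_add, Prod.snd_add, Prod.smul_fst,
        Prod.smul_snd, smul_eq_mul, Int.cast_neg] at heq ⊢
      linarith
    rw [Pi.sub_apply, hy, sub_eq_iff_eq_add, ← Pi.add_apply, affineFun_add_nsmul_crease, hc]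
  · refine absurd (locallyAffine_iff.2 ⟨g₂, c₂, ?_⟩) hx
    filter_upwards [hFmin, hcont₂.eventually_lt hcont₁ hgt] with y hy hlt
    rw [hy, min_eq_right hlt.le]

lemma wedge_rot_pos (hl : l ≠ 0) : 0 < wedge (toR l) (toR (rot l)) := by
  have hsq : wedge (toR l) (toR (rot l)) = ((l.1 ^ 2 + l.2 ^ 2 : ℤ) : ℝ) := by
    simp only [wedge_apply, toR, rot]
    push_cast
    ring
  rw [hsq, Int.cast_pos]
  rcases not_and_or.1 (mt Prod.ext_iff.2 hl) with h | h <;> have := pow_pos (abs_pos.2 h) 2 <;>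
    rw [sq_abs] at this <;> positivity

lemma not_locallyAffine_nsmul_crease (hm : 0 < m) (hl : l ≠ 0) (x : ℝ × ℝ) :
    ¬ LocallyAffine (m • crease l x) x := by
  intro h
  obtain ⟨g, c, hg⟩ := locallyAffine_iff.1 h
  have hline (v : ℝ × ℝ) : ∀ᶠ δ : ℝ in 𝓝[>] 0, m * min 0 (δ * wedge (toR l) v) =
      δ * affineFun g 0 v := by
    have hx : affineFun g c x = 0 := by rw [← hg.self_of_nhds]; simp [crease_self]
    filter_upwards [((tendsto_add_smul x v).eventually hg).filter_mono nhdsWithin_le_nhds]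
      with δ hδ
    rw [affineFun_add_smul, hx, zero_add, Pi.smul_apply, nsmul_eq_mul, crease,
      add_sub_cancel_left, map_smul, smul_eq_mul] at hδ
    exact hδ
  have hw := wedge_rot_pos hl
  obtain ⟨δ, ⟨h₁, h₂⟩, hδ : 0 < δ⟩ := (((hline (toR (rot l))).and
    (hline (-toR (rot l)))).and self_mem_nhdsWithin).exists
  have hneg : δ * -wedge (toR l) (toR (rot l)) < 0 :=
    mul_neg_of_pos_of_neg hδ (neg_neg_of_pos hw)
  rw [min_eq_left (mul_pos hδ hw).le] at h₁
  rw [map_neg, min_eq_right hneg.le] at h₂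
  have hm' : (m : ℝ) * (δ * -wedge (toR l) (toR (rot l))) < 0 :=
    mul_neg_of_pos_of_neg (Nat.cast_pos.2 hm) hneg
  simp only [affineFun, Prod.fst_neg, Prod.snd_neg] at h₁ h₂
  linarith

lemma IsPlanarGraph.mem_closure_setOf_onEdge (hC : IsPlanarGraph C) (hx : ptcVert C x) :
    x ∈ closure {y | ∃ l m, OnEdge C y l m} := by
  have hseg {p q : ℝ × ℝ} (hsub : openSegment ℝ p q ⊆ {y | ∃ l m, OnEdge C y l m}) :
      segment ℝ p q ⊆ closure {y | ∃ l m, OnEdge C y l m} := by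
    rw [← closure_openSegment]
    exact closure_mono hsub
  rcases hx with ⟨e, he, hx⟩ | ⟨r, hr, rfl⟩
  · have hne : e.1 ≠ e.2 := (sub_ne_zero.1 (hC.seg_ratDir e he).ne_zero).symm
    refine hseg (fun y hy => ⟨_, _, .seg he (openSegment_subset_segment ℝ _ _ hy) ?_ ?_⟩) ?_
    · rintro rfl; exact hne (left_mem_openSegment_iff.1 hy)
    · rintro rfl; exact hne (right_mem_openSegment_iff.1 hy)
    · rcases hx with rfl | rfl
      exacts [left_mem_segment ℝ _ _, right_mem_segment ℝ _ _]
  · have hl := toR_ne_zero (ne_zero_of_gcd_eq_one (hC.ray_gcd r hr))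
    have hne : r.1 ≠ r.1 + toR r.2 := by simpa using hl
    refine hseg (q := r.1 + toR r.2) (fun y hy => ?_) (left_mem_segment ℝ _ _)
    have hy' := hy
    rw [openSegment_eq_image'] at hy
    obtain ⟨t, ht, rfl⟩ := hy
    refine ⟨_, _, .ray hr ⟨t, ht.1.le, by simp⟩ ?_⟩
    intro h
    rw [h] at hy'
    exact hne (left_mem_openSegment_iff.1 hy')

lemma BendsAlong.mem_cornerLocus (hF : BendsAlong F C) (hC : IsPlanarGraph C)
    (h : OnEdge C x l m) : x ∈ cornerLocus F := by
  intro hx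
  have hkink := hF x (hC.not_ptcVert_of_onEdge h)
  rw [hC.kinks_chain_of_onEdge h] at hkink
  have hcrease := hx.sub hkink
  rw [sub_sub_cancel] at hcrease
  exact not_locallyAffine_nsmul_crease (hC.weight_pos_of_onEdge h)
    (ne_zero_of_gcd_eq_one (hC.gcd_eq_one_of_onEdge h)) x hcrease

theorem BendsAlong.ptcSupp_eq_cornerLocus (hF : BendsAlong F C) (hC : IsPlanarGraph C) :
    ptcSupp C = cornerLocus F := by
  refine Set.Subset.antisymm (fun x hx => ?_) fun x hx => ?_
  · by_cases hv : ptcVert C x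
    · have hsub : {y | ∃ l m, OnEdge C y l m} ⊆ cornerLocus F :=
        fun y ⟨l, m, hy⟩ => hF.mem_cornerLocus hC hy
      exact closure_minimal hsub (isClosed_cornerLocus F) (hC.mem_closure_setOf_onEdge hv)
    · obtain ⟨l, m, h⟩ := exists_onEdge hx hv
      exact hF.mem_cornerLocus hC h
  · by_contra hsupp
    have hkink := hF x fun hv => hsupp hv.mem_ptcSupp
    rw [hC.kinks_chain_of_notMem hsupp, sub_zero] at hkink
    exact hx hkink

theorem representsCornerLocus_iff_bendsAlong (hC : IsPlanarGraph C) :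
    RepresentsCornerLocus F C ↔ BendsAlong F C := by
  constructor
  · rintro ⟨hsupp, hsegs, hrays⟩ x hv
    by_cases hx : x ∈ ptcSupp C
    · obtain ⟨l, m, h⟩ := exists_onEdge hx hv
      rw [hC.kinks_chain_of_onEdge h]
      refine EdgeWeightIs.locallyAffine_sub ?_ (hsupp ▸ hx)
      cases h with
      | seg he hx hx₁ hx₂ => exact hsegs _ he x hx hx₁ hx₂
      | ray hr hx hx₁ => exact hrays _ hr x hx hx₁
    · rw [hC.kinks_chain_of_notMem hx, sub_zero]
      rw [hsupp] at hx
      exact not_not.1 hx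
  · intro hF
    have hweight {x l m} (h : OnEdge C x l m) : EdgeWeightIs F x l m :=
      .of_locallyAffine (hC.kinks_chain_of_onEdge h ▸ hF x (hC.not_ptcVert_of_onEdge h))
    exact ⟨hF.ptcSupp_eq_cornerLocus hC, fun e he x hx hx₁ hx₂ => hweight (.seg he hx hx₁ hx₂),
      fun r hr x hx hx₁ => hweight (.ray hr hx hx₁)⟩

end

/-! ### Sides of a lattice polygon -/

lemma exists_smul_eq_of_wedge_eq_zero {u w : ℝ × ℝ} (hu : u ≠ 0) (h : wedge u w = 0) :
    ∃ r : ℝ, w = r • u := by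
  rw [wedge_apply] at h
  rcases not_and_or.1 (mt Prod.ext_iff.2 hu) with h₁ | h₂
  · refine ⟨w.1 / u.1, Prod.ext (div_mul_cancel₀ _ h₁).symm ?_⟩
    rw [Prod.smul_snd, smul_eq_mul, div_mul_eq_mul_div, eq_div_iff h₁]
    linarith
  · refine ⟨w.2 / u.2, Prod.ext ?_ (div_mul_cancel₀ _ h₂).symm⟩
    rw [Prod.smul_fst, smul_eq_mul, div_mul_eq_mul_div, eq_div_iff h₂]
    linarith

lemma wedge_sub_sub_rotate (a b c : ℝ × ℝ) :
    wedge (b - a) (c - a) = wedge (c - b) (a - b) := by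
  simp only [wedge_apply, Prod.fst_sub, Prod.snd_sub]
  ring

lemma wedge_swap (u w : ℝ × ℝ) : wedge u w = -wedge w u := by
  simp only [wedge_apply]
  ring

lemma wedge_mul_wedge_sub (p q u w : ℝ × ℝ) :
    wedge p u * wedge q w - wedge p w * wedge q u = wedge p q * wedge u w := by
  simp only [wedge_apply]
  ring

lemma exists_eq_wedge (f : (ℝ × ℝ) →ₗ[ℝ] ℝ) : ∃ p, f = wedge p := by
  refine ⟨(f (0, 1), -f (1, 0)), ?_⟩
  ext <;> simp [wedge_apply]

lemma wedge_ne_zero {d : ℝ × ℝ} (hd : d ≠ 0) : wedge d ≠ 0 := by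
  intro h
  have h₁ := LinearMap.congr_fun h (0, 1)
  have h₂ := LinearMap.congr_fun h (1, 0)
  simp only [wedge_apply, LinearMap.zero_apply] at h₁ h₂
  exact hd (Prod.ext (by simpa using h₁) (by simpa using h₂))

lemma wedge_pos_of_mem_interior {s : Set (ℝ × ℝ)} {d a : ℝ × ℝ} (hd : d ≠ 0)
    (h : ∀ y ∈ s, 0 ≤ wedge d (y - a)) {x : ℝ × ℝ} (hx : x ∈ interior s) : 0 < wedge d (x - a) := by
  have hsurj : Function.Surjective (wedge d) :=
    LinearMap.surjective_of_ne_zero (wedge_ne_zero hd)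
  have hopen : IsOpenMap fun y => wedge d (y - a) :=
    ((wedge d).isOpenMap_of_finiteDimensional hsurj).comp (Homeomorph.subRight a).isOpenMap
  have hsub : (fun y => wedge d (y - a)) '' interior s ⊆ Set.Ici 0 :=
    Set.image_subset_iff.2 fun y hy => h y (interior_subset hy)
  have himage := interior_maximal hsub (hopen _ isOpen_interior)
  rw [interior_Ici] at himage
  exact himage ⟨x, hx, rfl⟩

lemma wedge_sub_ne_zero_of_mem_extremePoints {Ω : Set (ℝ × ℝ)} {a b c : ℝ × ℝ}
    (ha : a ∈ Ω.extremePoints ℝ) (hb : b ∈ Ω.extremePoints ℝ) (hc : c ∈ Ω.extremePoints ℝ)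
    (hab : a ≠ b) (hbc : b ≠ c) (hca : c ≠ a) : wedge (b - a) (c - a) ≠ 0 := by
  intro h
  obtain ⟨r, hr⟩ := exists_smul_eq_of_wedge_eq_zero (sub_ne_zero.2 hab.symm) h
  have hcol : Collinear ℝ {a, b, c} := by
    refine (collinear_iff_of_mem (Set.mem_insert a _)).2 ⟨b - a, ?_⟩
    rintro p (rfl | rfl | rfl)
    · exact ⟨0, by simp⟩
    · exact ⟨1, by simp⟩
    · exact ⟨r, by simp [← hr]⟩
  have hext {p q r : ℝ × ℝ} (hp : p ∈ Ω.extremePoints ℝ) (hq : q ∈ Ω.extremePoints ℝ)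
      (hr : r ∈ Ω.extremePoints ℝ) (h : Wbtw ℝ p q r) : p = q ∨ r = q :=
    (mem_extremePoints_iff_forall_segment.1 hq).2 p hp.1 r hr.1 (mem_segment_iff_wbtw.2 h)
  rcases hcol.wbtw_or_wbtw_or_wbtw with h | h | h
  · exact (hext ha hb hc h).elim hab hbc.symm
  · exact (hext hb hc ha h).elim hbc hca.symm
  · exact (hext hc ha hb h).elim hca hab.symm

namespace IsLatticePolygon

variable {Ω : Set (ℝ × ℝ)} (hΩ : IsLatticePolygon Ω)
include hΩ

lemma isCompact : IsCompact Ω := by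
  obtain ⟨⟨S, rfl⟩, -⟩ := hΩ
  exact (S.finite_toSet.image toR).isCompact_convexHull (𝕜 := ℝ)

lemma convex : Convex ℝ Ω := by
  obtain ⟨⟨S, rfl⟩, -⟩ := hΩ
  exact convex_convexHull ℝ _

lemma extremePoints_subset_range_toR : Ω.extremePoints ℝ ⊆ Set.range toR := by
  obtain ⟨⟨S, rfl⟩, -⟩ := hΩ
  exact extremePoints_convexHull_subset.trans (Set.image_subset_range _ _)

lemma finite_extremePoints : (Ω.extremePoints ℝ).Finite := by
  obtain ⟨⟨S, rfl⟩, -⟩ := hΩ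
  exact (S.finite_toSet.image toR).subset extremePoints_convexHull_subset

lemma convexHull_extremePoints : convexHull ℝ (Ω.extremePoints ℝ) = Ω := by
  have hclosed := (hΩ.finite_extremePoints.isCompact_convexHull (𝕜 := ℝ)).isClosed
  rw [← hclosed.closure_eq, closure_convexHull_extremePoints hΩ.isCompact hΩ.convex]

lemma ratDir_sub {a b : ℝ × ℝ} (ha : a ∈ Ω.extremePoints ℝ) (hb : b ∈ Ω.extremePoints ℝ)
    (hab : a ≠ b) : RatDir (b - a) := by
  obtain ⟨a, rfl⟩ := hΩ.extremePoints_subset_range_toR ha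
  obtain ⟨b, rfl⟩ := hΩ.extremePoints_subset_range_toR hb
  rw [← toR_sub]
  exact ratDir_toR (sub_ne_zero.2 fun h => hab (congrArg toR h.symm))

lemma nonempty_extremePoints_diff (v : ℝ × ℝ) : (Ω.extremePoints ℝ \ {v}).Nonempty := by
  rw [Set.nonempty_iff_ne_empty, Ne, Set.sdiff_eq_empty]
  intro h
  have hsub : Ω ⊆ {v} := by
    rw [← hΩ.convexHull_extremePoints]
    exact convexHull_min h (convex_singleton v)
  obtain ⟨x, hx⟩ := hΩ.2
  simpa using interior_mono hsub hx

lemma exists_wedge_pos {v : ℝ × ℝ} (hv : v ∈ Ω.extremePoints ℝ) :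
    ∃ p, ∀ w ∈ Ω.extremePoints ℝ \ {v}, 0 < wedge p (w - v) := by
  have hnot : v ∉ convexHull ℝ (Ω.extremePoints ℝ \ {v}) := fun h =>
    (hΩ.convex.mem_extremePoints_iff_mem_sdiff_convexHull_sdiff.1 hv).2
      (convexHull_mono (Set.sdiff_subset_sdiff_left extremePoints_subset) h)
  have hclosed : IsClosed (convexHull ℝ (Ω.extremePoints ℝ \ {v})) :=
    (hΩ.finite_extremePoints.sdiff.isCompact_convexHull (𝕜 := ℝ)).isClosed
  obtain ⟨f, u, hfv, hf⟩ := geometric_hahn_banach_point_closed (convex_convexHull ℝ _) hclosed hnot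
  obtain ⟨p, hp⟩ := exists_eq_wedge f.toLinearMap
  refine ⟨p, fun w hw => ?_⟩
  rw [← hp, map_sub, sub_pos]
  exact hfv.trans (hf w (subset_convexHull ℝ _ hw))

lemma exists_supporting_vertex {v : ℝ × ℝ} (hv : v ∈ Ω.extremePoints ℝ) (s : ℝ) :
    ∃ a ∈ Ω.extremePoints ℝ \ {v}, ∀ x ∈ Ω, 0 ≤ s * wedge (a - v) (x - v) := by
  obtain ⟨p, hp⟩ := hΩ.exists_wedge_pos hv
  obtain ⟨w₀, hw₀⟩ := hΩ.nonempty_extremePoints_diff v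
  let q := (s / wedge p (w₀ - v)) • (w₀ - v)
  have hq : wedge p q = s := by
    rw [map_smul, smul_eq_mul, div_mul_cancel₀ _ (hp w₀ hw₀).ne']
  obtain ⟨a, ha, hmin⟩ := Set.exists_min_image (Ω.extremePoints ℝ \ {v})
    (fun w => wedge q (w - v) / wedge p (w - v)) hΩ.finite_extremePoints.sdiff ⟨w₀, hw₀⟩
  refine ⟨a, ha, ?_⟩
  have hsub : Ω.extremePoints ℝ ⊆ {x | 0 ≤ s * wedge (a - v) (x - v)} := fun w hw => by
    rcases eq_or_ne w v with rfl | hwv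
    · simp
    · have hle := hmin w ⟨hw, hwv⟩
      rw [div_le_div_iff₀ (hp a ha) (hp w ⟨hw, hwv⟩)] at hle
      have hplucker := wedge_mul_wedge_sub p q (a - v) (w - v)
      rw [hq] at hplucker
      rw [Set.mem_ofPred_eq, ← hplucker]
      linarith
  have hconv : Convex ℝ {x | 0 ≤ s * wedge (a - v) (x - v)} := by
    have hpre := ((convex_Ici (0 : ℝ)).linear_preimage (s • wedge (a - v))).translate_preimage_left
      (-v)
    simp only [← sub_eq_add_neg] at hpre
    exact hpre
  rw [← hΩ.convexHull_extremePoints]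
  exact fun x hx => convexHull_min hsub hconv hx

end IsLatticePolygon

/-- `[a, b]` is a side of `Ω`, traversed with `Ω` on its left. -/
def PosSide (Ω : Set (ℝ × ℝ)) (a b : ℝ × ℝ) : Prop :=
  a ≠ b ∧ a ∈ Ω.extremePoints ℝ ∧ b ∈ Ω.extremePoints ℝ ∧ ∀ x ∈ Ω, 0 ≤ wedge (b - a) (x - a)

namespace PosSide

variable {Ω : Set (ℝ × ℝ)} (hΩ : IsLatticePolygon Ω) {a b c : ℝ × ℝ}

include hΩ in
lemma isSide (h : PosSide Ω a b) : IsSide Ω a b := by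
  obtain ⟨hab, ha, hb, hpos⟩ := h
  refine ⟨hab, ha, hb, fun x hx => ?_⟩
  rw [hΩ.isCompact.isClosed.frontier_eq]
  refine ⟨hΩ.convex.segment_subset ha.1 hb.1 hx, fun hint => ?_⟩
  have hpos := wedge_pos_of_mem_interior (sub_ne_zero.2 hab.symm) hpos hint
  rw [segment_eq_image'] at hx
  obtain ⟨t, -, rfl⟩ := hx
  simp only [add_sub_cancel_left, map_smul, wedge_self, smul_zero, lt_self_iff_false] at hpos

include hΩ in
lemma not_swap (h : PosSide Ω a b) : ¬ PosSide Ω b a := by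
  intro h'
  obtain ⟨x, hx⟩ := hΩ.2
  have hpos := wedge_pos_of_mem_interior (sub_ne_zero.2 h.1.symm) h.2.2.2 hx
  have hneg := wedge_pos_of_mem_interior (sub_ne_zero.2 h.1) h'.2.2.2 hx
  simp only [wedge_apply, Prod.fst_sub, Prod.snd_sub] at hpos hneg
  linarith

lemma right_unique (hb : PosSide Ω a b) (hc : PosSide Ω a c) : b = c := by
  by_contra hbc
  refine wedge_sub_ne_zero_of_mem_extremePoints hb.2.1 hb.2.2.1 hc.2.2.1 hb.1 hbc hc.1.symm
    (le_antisymm ?_ (hb.2.2.2 c hc.2.2.1.1))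
  rw [wedge_swap, neg_nonpos]
  exact hc.2.2.2 b hb.2.2.1.1

lemma left_unique (ha : PosSide Ω a c) (hb : PosSide Ω b c) : a = b := by
  by_contra hab
  have h₁ := ha.2.2.2 b hb.2.1.1
  have h₂ := hb.2.2.2 a ha.2.1.1
  refine wedge_sub_ne_zero_of_mem_extremePoints ha.2.1 ha.2.2.1 hb.2.1 ha.1 hb.1.symm
    (Ne.symm hab) (le_antisymm ?_ h₁)
  rw [wedge_sub_sub_rotate b, wedge_sub_sub_rotate c, wedge_swap] at h₂
  linarith

end PosSide

namespace IsLatticePolygon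

variable {Ω : Set (ℝ × ℝ)} (hΩ : IsLatticePolygon Ω)
include hΩ

lemma exists_posSide_right {v : ℝ × ℝ} (hv : v ∈ Ω.extremePoints ℝ) : ∃ a, PosSide Ω v a := by
  obtain ⟨a, ha, h⟩ := hΩ.exists_supporting_vertex hv 1
  simp only [one_mul] at h
  exact ⟨a, Ne.symm ha.2, hv, ha.1, h⟩

lemma exists_posSide_left {v : ℝ × ℝ} (hv : v ∈ Ω.extremePoints ℝ) : ∃ b, PosSide Ω b v := by
  obtain ⟨b, hb, h⟩ := hΩ.exists_supporting_vertex hv (-1)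
  refine ⟨b, hb.2, hb.1, hv, fun x hx => (h x hx).trans_eq ?_⟩
  rw [neg_one_mul, wedge_sub_sub_rotate v, ← wedge_swap]

lemma finite_setOf_posSide : {e : Seg | PosSide Ω e.1 e.2}.Finite :=
  (hΩ.finite_extremePoints.prod hΩ.finite_extremePoints).subset fun _ he => ⟨he.2.1, he.2.2.1⟩

end IsLatticePolygon

/-! ### The potential of an Ω-tropical curve -/

section

/-- A finite graph with bounded edges only. -/
def PlaneTropData.ofSegs (E : Finset Seg) (m : Seg → ℕ) : PlaneTropData := ⟨E, ∅, m, 0⟩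

/-- The chain of the positively oriented sides of `Ω`, weighted by `d`. -/
noncomputable def IsLatticePolygon.sideChain {Ω : Set (ℝ × ℝ)} (hΩ : IsLatticePolygon Ω)
    (d : Seg → ℤ) : RayChain :=
  graphChain hΩ.finite_setOf_posSide.toFinset d

open PlaneTropData

variable {Ω : Set (ℝ × ℝ)} {E : Finset Seg} {m : Seg → ℕ} {v x : ℝ × ℝ}

lemma ptcVert_ofSegs : ptcVert (ofSegs E m) v ↔ IsVert E v := by
  simp [ptcVert, IsVert, ofSegs]

lemma ptcSupp_ofSegs (E : Finset Seg) (m : Seg → ℕ) : ptcSupp (ofSegs E m) = gsupp E := by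
  simp [ptcSupp, gsupp, ofSegs]

lemma ptcBalSum_ofSegs (E : Finset Seg) (m : Seg → ℕ) (v : ℝ × ℝ) :
    ptcBalSum (ofSegs E m) v = balSum E m v := by
  simp [ptcBalSum, ofSegs]

lemma IsVert.mem_gsupp (hv : IsVert E v) : v ∈ gsupp E := by
  rw [← ptcSupp_ofSegs E 0]
  exact (ptcVert_ofSegs.2 hv).mem_ptcSupp

lemma OmegaTropCurve.isPlanarGraph (hE : OmegaTropCurve Ω E m) : IsPlanarGraph (ofSegs E m) :=
  let ⟨_, hplanar, hpos, hdir, _⟩ := hE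
  ⟨hpos, hdir, by simp [ofSegs], by simp [ofSegs], hplanar, by simp [ofSegs], by simp [ofSegs]⟩

namespace IsLatticePolygon

variable (hΩ : IsLatticePolygon Ω) (d : Seg → ℤ)

lemma divergence_sideChain_of_posSide {a b : ℝ × ℝ} (ha : PosSide Ω v a) (hb : PosSide Ω b v) :
    divergence (hΩ.sideChain d) v = d (v, a) • prim (a - v) + d (b, v) • prim (b - v) := by
  classical
  have hout : hΩ.finite_setOf_posSide.toFinset.filter (fun e => e.1 = v) = {(v, a)} := by
    ext ⟨p, q⟩
    simp only [Finset.mem_filter, Set.Finite.mem_toFinset, Set.mem_ofPred_eq,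
      Finset.mem_singleton, Prod.mk.injEq]
    constructor
    · rintro ⟨h, rfl⟩
      exact ⟨rfl, h.right_unique ha⟩
    · rintro ⟨rfl, rfl⟩
      exact ⟨ha, rfl⟩
  have hin : hΩ.finite_setOf_posSide.toFinset.filter (fun e => e.2 = v) = {(b, v)} := by
    ext ⟨p, q⟩
    simp only [Finset.mem_filter, Set.Finite.mem_toFinset, Set.mem_ofPred_eq,
      Finset.mem_singleton, Prod.mk.injEq]
    constructor
    · rintro ⟨h, rfl⟩
      exact ⟨h.left_unique hb, rfl⟩
    · rintro ⟨rfl, rfl⟩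
      exact ⟨hb, rfl⟩
  rw [sideChain, divergence_graphChain_apply, hout, hin, Finset.sum_singleton,
    Finset.sum_singleton, ← neg_sub b v, prim_neg, smul_neg, sub_neg_eq_add]
  exact hΩ.ratDir_sub ha.2.1 hb.2.1 hb.1.symm

lemma divergence_sideChain_of_notMem (hv : v ∉ Ω.extremePoints ℝ) :
    divergence (hΩ.sideChain d) v = 0 := by
  rw [sideChain, divergence_graphChain_apply, Finset.sum_eq_zero, Finset.sum_eq_zero, sub_zero]
  all_goals
    intro e he
    obtain ⟨h, rfl⟩ := Finset.mem_filter.1 he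
    rw [Set.Finite.mem_toFinset] at h
  · exact absurd h.2.2.1 hv
  · exact absurd h.2.1 hv

lemma kinks_sideChain (hx : x ∉ frontier Ω) : kinks x (hΩ.sideChain d) = 0 := by
  rw [sideChain, graphChain, map_sum]
  refine Finset.sum_eq_zero fun e he => ?_
  rw [Set.Finite.mem_toFinset] at he
  have hside : seg e ⊆ frontier Ω := (he.isSide hΩ).2.2.2
  rw [map_smul, kinks_segChain (hΩ.ratDir_sub he.2.1 he.2.2.1 he.1), if_neg fun h => hx (hside h),
    smul_zero]
  rintro rfl
  exact hx (hside (right_mem_segment ℝ _ _))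

lemma sideChain_mem_supported :
    hΩ.sideChain d ∈ Finsupp.supported ℤ ℤ {r | r.1 ∈ Ω.extremePoints ℝ ∧ r.2 ≠ 0} := by
  refine sum_mem fun e he => Submodule.smul_mem _ _ ?_
  rw [Set.Finite.mem_toFinset] at he
  have hdir := prim_ne_zero (hΩ.ratDir_sub he.2.1 he.2.2.1 he.1)
  exact sub_mem (Finsupp.single_mem_supported ℤ 1 ⟨he.2.1, hdir⟩)
    (Finsupp.single_mem_supported ℤ 1 ⟨he.2.2.1, hdir⟩)

end IsLatticePolygon

lemma OmegaTropCurve.balSum_eq_zero (hE : OmegaTropCurve Ω E m) (hv : v ∉ Ω.extremePoints ℝ) :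
    balSum E m v = 0 := by
  obtain ⟨-, -, -, -, hΩ, hfrontier, hbal, -⟩ := hE
  by_cases hvert : IsVert E v
  · refine hbal v hvert ?_
    by_contra hint
    exact hv (hfrontier ▸ ⟨hvert.mem_gsupp, subset_closure (hΩ hvert.mem_gsupp), hint⟩)
  · rw [← ptcBalSum_ofSegs, ptcBalSum_eq_zero_of_not_ptcVert (mt ptcVert_ofSegs.1 hvert)]

/-- Subtracting the weighted sides from `C` turns the outer balancing condition into balancing. -/
lemma OmegaTropCurve.exists_divergence_eq_zero (hΩ : IsLatticePolygon Ω)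
    (hE : OmegaTropCurve Ω E m) :
    ∃ d, divergence ((ofSegs E m).chain - hΩ.sideChain d) = 0 := by
  obtain ⟨d, hd, hbal, -⟩ := hE.2.2.2.2.2.2.2
  refine ⟨d, ?_⟩
  ext1 v
  rw [map_sub, Finsupp.sub_apply, hE.isPlanarGraph.divergence_chain, ptcBalSum_ofSegs,
    Finsupp.zero_apply, sub_eq_zero]
  by_cases hv : v ∈ Ω.extremePoints ℝ
  · obtain ⟨a, ha⟩ := hΩ.exists_posSide_right hv
    obtain ⟨b, hb⟩ := hΩ.exists_posSide_left hv
    have hab : a ≠ b := by rintro rfl; exact ha.not_swap hΩ hb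
    have hbv := hb.isSide hΩ
    have hvb : IsSide Ω v b :=
      ⟨hbv.1.symm, hbv.2.2.1, hbv.2.1, (segment_symm ℝ v b).trans_subset hbv.2.2.2⟩
    rw [hbal v hv a b hab (ha.isSide hΩ) hvb, (hd b v hbv).2.symm,
      hΩ.divergence_sideChain_of_posSide d ha hb, (hd b v hbv).2]
  · rw [hE.balSum_eq_zero hv, hΩ.divergence_sideChain_of_notMem d hv]

lemma IsLatticePolygon.exists_eqOn_frontier_intAffineFun (hΩ : IsLatticePolygon Ω)
    {F : ℝ × ℝ → ℝ} (hF : Continuous F) (h : ∀ x ∉ Ω, LocallyIntAffine F x) :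
    ∃ g : ℤ × ℤ, ∃ c, Set.EqOn F (affineFun (toR g) c) (frontier Ω) := by
  have hconn := isConnected_compl_closure_of_convex one_lt_rank_plane hΩ.convex hΩ.2
    hΩ.isCompact.isBounded
  rw [hΩ.isCompact.isClosed.closure_eq] at hconn
  obtain ⟨g, c, hgc⟩ := exists_eqOn_closure_intAffineFun hF hconn h
  exact ⟨g, c, hgc.mono (frontier_eq_closure_inter_closure.trans_subset Set.inter_subset_right)⟩

lemma LocallyIntAffine.of_eventuallyEq {F G : ℝ × ℝ → ℝ} {g : ℤ × ℤ} {c : ℝ}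
    (h : F =ᶠ[𝓝 x] affineFun (toR g) c + G) : LocallyIntAffine (F - G) x :=
  ⟨g, c, h.mono fun _ hy => sub_eq_iff_eq_add.2 hy⟩

lemma OmegaTropCurve.mem_supported (hΩ : IsLatticePolygon Ω) (hE : OmegaTropCurve Ω E m)
    (d : Seg → ℤ) : (ofSegs E m).chain - hΩ.sideChain d ∈
      Finsupp.supported ℤ ℤ {r | (IsVert E r.1 ∨ r.1 ∈ frontier Ω) ∧ r.2 ≠ 0} := by
  refine sub_mem (Finsupp.supported_mono ?_ hE.isPlanarGraph.chain_mem_supported)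
    (Finsupp.supported_mono ?_ (hΩ.sideChain_mem_supported d))
  · exact fun r hr => ⟨.inl (ptcVert_ofSegs.1 hr.1), hr.2⟩
  · obtain ⟨-, -, -, -, -, hfrontier, -⟩ := hE
    exact fun r hr => ⟨.inr (hfrontier.symm.subset hr.1).2, hr.2⟩

/-- A potential of the curve `(E, m)` in `Ω`: a continuous function vanishing on `∂Ω` which inside
`Ω` bends along the edges and nowhere else. -/
structure IsOmegaPotential (Ω : Set (ℝ × ℝ)) (E : Finset Seg) (m : Seg → ℕ) (G : ℝ × ℝ → ℝ) :
    Prop where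
  continuous : Continuous G
  eq_zero_of_mem_frontier : ∀ x ∈ frontier Ω, G x = 0
  locallyIntAffine_sub_kinks : ∀ x ∈ interior Ω, ¬ IsVert E x →
    LocallyIntAffine (G - kinks x (ofSegs E m).chain) x

/-- Outside `Ω` the potential of the curve minus the sides is affine; subtracting this affine
function makes it vanish on `∂Ω`. -/
theorem OmegaTropCurve.exists_isOmegaPotential (hΩ : IsLatticePolygon Ω)
    (hE : OmegaTropCurve Ω E m) : ∃ G, IsOmegaPotential Ω E m G := by
  obtain ⟨d, hbal⟩ := hE.exists_divergence_eq_zero hΩ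
  set σ := (ofSegs E m).chain - hΩ.sideChain d with hσ
  have hsupp := (Finsupp.mem_supported _ _).1 (hE.mem_supported hΩ d)
  have hdir : ∀ r ∈ σ.support, r.2 ≠ 0 := fun r hr => (hsupp hr).2
  have hcont := continuous_potential hbal hdir
  have hbend {x : ℝ × ℝ} (hx : x ∉ frontier Ω) (hv : ¬ IsVert E x) :
      LocallyIntAffine (potential σ - kinks x (ofSegs E m).chain) x := by
    obtain ⟨g, -, c, h⟩ := potential_eventuallyEq hbal hdir (x₀ := x) fun r hr h =>
      (hsupp hr).1.elim (fun hr => hv (h ▸ hr)) fun hr => hx (h ▸ hr)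
    have hkinks : kinks x σ = kinks x (ofSegs E m).chain := by
      rw [hσ, map_sub, hΩ.kinks_sideChain d hx, sub_zero]
    exact .of_eventuallyEq (hkinks ▸ h)
  obtain ⟨g, c, hgc⟩ := hΩ.exists_eqOn_frontier_intAffineFun hcont fun x hx => by
    have hsub : gsupp E ⊆ Ω := hE.2.2.2.2.1
    have hx' := hbend (fun h => hx (hΩ.isCompact.isClosed.frontier_subset h))
      fun hv => hx (hsub hv.mem_gsupp)
    rwa [hE.isPlanarGraph.kinks_chain_of_notMem fun h => hx (hsub (ptcSupp_ofSegs E m ▸ h)),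
      sub_zero] at hx'
  refine ⟨potential σ - affineFun (toR g) c, hcont.sub (continuous_affineFun _ _),
    fun x hx => sub_eq_zero.2 (hgc hx), fun x hx hv => ?_⟩
  rw [sub_right_comm]
  exact (hbend (fun h => h.2 hx) hv).sub ⟨g, c, .rfl⟩

end

/-! ### Comparison of a curve with its extensions -/

section
open PlaneTropData

variable {Ω : Set (ℝ × ℝ)} {E : Finset Seg} {m : Seg → ℕ} {C : PlaneTropData} {F : ℝ × ℝ → ℝ}
  {x : ℝ × ℝ}

lemma wedge_sub_eq_zero_of_mem_raySet {r : (ℝ × ℝ) × (ℤ × ℤ)} {p q : ℝ × ℝ} (hp : p ∈ raySet r)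
    (hq : q ∈ raySet r) : wedge (toR r.2) (q - p) = 0 := by
  rw [← wedge_sub_eq_of_mem_raySet hp, wedge_sub_eq_of_mem_raySet hq, sub_self, map_zero]

lemma seg_subset_raySet {e : Seg} (he : RatDir (e.2 - e.1)) :
    seg e ⊆ raySet (e.1, prim (e.2 - e.1)) := by
  obtain ⟨-, t, ht, hd⟩ := primOut_prim he
  rw [seg_eq_image ht hd]
  rintro _ ⟨s, hs, rfl⟩
  exact ⟨s, hs.1, rfl⟩

lemma eq_or_eq_neg_of_mem_raySet {e : Seg} {r : (ℝ × ℝ) × (ℤ × ℤ)}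
    (he : RatDir (e.2 - e.1)) (hr : Int.gcd r.2.1 r.2.2 = 1) (h₁ : e.1 ∈ raySet r)
    (h₂ : e.2 ∈ raySet r) : r.2 = prim (e.2 - e.1) ∨ r.2 = -prim (e.2 - e.1) := by
  obtain ⟨hgcd, t, ht, hd⟩ := primOut_prim he
  refine eq_or_eq_neg_of_wedge_eq_zero hr hgcd ?_
  have hw := wedge_sub_eq_zero_of_mem_raySet h₁ h₂
  rw [hd, map_smul, smul_eq_mul] at hw
  exact (mul_eq_zero.1 hw).resolve_left ht.ne'

lemma ExtendsCurve.exists_onEdge (hC : ExtendsCurve Ω E m C) {e : Seg} (he : e ∈ E)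
    (hdir : RatDir (e.2 - e.1)) (hx : x ∈ seg e) (hv : ¬ ptcVert C x) :
    ∃ l, OnEdge C x l (m e) ∧ (l = prim (e.2 - e.1) ∨ l = -prim (e.2 - e.1)) := by
  have hgraph := hC.1.isPlanarGraph
  have h₁ : e.1 ∈ seg e := left_mem_segment ℝ _ _
  have h₂ : e.2 ∈ seg e := right_mem_segment ℝ _ _
  rcases hC.2.2 e he with ⟨e', he', hsub, hm⟩ | ⟨r, hr, hsub, hm⟩ <;> rw [← hm]
  · have hdir' := hgraph.seg_ratDir e' he'
    have hray := hsub.trans (seg_subset_raySet hdir')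
    exact ⟨_, .seg he' (hsub hx) (fun h => hv (.inl ⟨e', he', .inl h.symm⟩))
      fun h => hv (.inl ⟨e', he', .inr h.symm⟩),
      eq_or_eq_neg_of_mem_raySet hdir (primOut_prim hdir').1 (hray h₁) (hray h₂)⟩
  · exact ⟨_, .ray hr (hsub hx) fun h => hv (.inr ⟨r, hr, h.symm⟩),
      eq_or_eq_neg_of_mem_raySet hdir (hgraph.ray_gcd r hr) (hsub h₁) (hsub h₂)⟩

lemma locallyIntAffine_zero (x : ℝ × ℝ) : LocallyIntAffine 0 x :=
  ⟨0, 0, .of_forall fun y => by simp [affineFun, toR]⟩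

lemma locallyIntAffine_nsmul_crease_sub {k l : ℤ × ℤ} (h : k = l ∨ k = -l) (n : ℕ) (x : ℝ × ℝ) :
    LocallyIntAffine (n • crease k x - n • crease l x) x := by
  rcases h with rfl | rfl
  · rw [sub_self]
    exact locallyIntAffine_zero x
  · refine ⟨-(n • rot l), n * wedge (toR l) x, .of_forall fun y => ?_⟩
    rw [crease_neg, ← smul_sub, sub_sub_cancel_left]
    simp only [Pi.smul_apply, Pi.neg_apply, affineFun, toR, Prod.fst_neg, Prod.snd_neg,
      Prod.smul_fst, Prod.smul_snd]
    simp only [nsmul_eq_mul, Int.cast_neg, Int.cast_mul, Int.cast_natCast]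
    ring

/-- Reversing an edge changes its crease by an integral affine function only. -/
theorem ExtendsCurve.locallyIntAffine_kinks_sub (hC : ExtendsCurve Ω E m C)
    (hE : IsPlanarGraph (ofSegs E m)) (hx : x ∈ Ω) (hvC : ¬ ptcVert C x) (hvE : ¬ IsVert E x) :
    LocallyIntAffine (kinks x C.chain - kinks x (ofSegs E m).chain) x := by
  have hgraph := hC.1.isPlanarGraph
  have hsupp : x ∈ ptcSupp C ↔ x ∈ gsupp E := by
    rw [← hC.2.1, Set.mem_inter_iff, and_iff_left hx]
  by_cases hxE : x ∈ gsupp E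
  · obtain ⟨l, n, h⟩ := _root_.exists_onEdge ((ptcSupp_ofSegs E m).symm ▸ hxE)
      (mt ptcVert_ofSegs.1 hvE)
    rw [hE.kinks_chain_of_onEdge h]
    cases h with
    | @seg e he hxe =>
      obtain ⟨k, hk, hkl⟩ := hC.exists_onEdge he (hE.seg_ratDir e he) hxe hvC
      rw [hgraph.kinks_chain_of_onEdge hk]
      exact locallyIntAffine_nsmul_crease_sub hkl (m e) x
    | ray hr => exact absurd hr (Finset.notMem_empty _)
  · rw [hgraph.kinks_chain_of_notMem (mt hsupp.1 hxE),
      hE.kinks_chain_of_notMem (ptcSupp_ofSegs E m ▸ hxE), sub_zero]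
    exact locallyIntAffine_zero x

/-! ### Existence and uniqueness -/

lemma IsLatticePolygon.affineFun_eq_zero (hΩ : IsLatticePolygon Ω) {g : ℝ × ℝ} {c : ℝ}
    (h : ∀ x ∈ frontier Ω, affineFun g c x = 0) : affineFun g c = 0 := by
  have hzero : affineFun 0 0 = 0 := by funext x; simp [affineFun]
  have hconvex : Convex ℝ {x | affineFun g c x = 0} := by
    intro x hx y hy a b _ _ hab
    simp only [affineFun, Set.mem_ofPred_eq, Prod.fst_add, Prod.snd_add, Prod.smul_fst,
      Prod.smul_snd, smul_eq_mul] at hx hy ⊢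
    linear_combination a * hx + b * hy - c * hab
  have hsub : Ω ⊆ {x | affineFun g c x = 0} := by
    rw [← hΩ.convexHull_extremePoints]
    exact convexHull_min (fun x hx => h x ⟨subset_closure hx.1,
      (disjoint_interior_extremePoints Ω).notMem_of_mem_right hx⟩) hconvex
  obtain ⟨x₀, hx₀⟩ := hΩ.2
  rw [← hzero]
  refine affineFun_eq_of_eventuallyEq (x := x₀) ?_
  filter_upwards [mem_interior_iff_mem_nhds.1 hx₀] with x hx
  rw [hzero]
  exact hsub hx

lemma IsLatticePolygon.eqOn_zero_of_locallyAffine (hΩ : IsLatticePolygon Ω) (hF : Continuous F)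
    {P : Set (ℝ × ℝ)} (hP : P.Countable) (h : ∀ x ∈ interior Ω \ P, LocallyAffine F x)
    (h₀ : ∀ x ∈ frontier Ω, F x = 0) : Set.EqOn F 0 Ω := by
  obtain ⟨g, c, hgc⟩ := exists_eqOn_closure_affineFun hF
    (isConnected_interior_diff_of_convex one_lt_rank_plane hΩ.convex hΩ.2
      hΩ.isCompact.isBounded hP) h
  replace hgc := hgc.mono (subset_closure_interior_diff_of_convex hΩ.convex hΩ.2 hP)
  rw [hΩ.affineFun_eq_zero fun x hx =>
    (hgc (hΩ.isCompact.isClosed.frontier_subset hx)).symm.trans (h₀ x hx)] at hgc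
  exact hgc

lemma IsTropPoly.continuous (hF : IsTropPoly F) : Continuous F := by
  obtain ⟨A, hA, a, h⟩ := hF
  rw [funext h]
  exact Continuous.finset_inf'_apply hA fun g _ => continuous_affineFun (toR g) (a g)

theorem BendsAlong.eq_of_eqOn_frontier {G : ℝ × ℝ → ℝ} (hΩ : IsLatticePolygon Ω)
    (hF : BendsAlong F C) (hG : BendsAlong G C) (hFc : Continuous F) (hGc : Continuous G)
    (h : Set.EqOn F G (frontier Ω)) : F = G := by
  have hP : {v | ptcVert C v}.Countable := (finite_setOf_ptcVert C).countable
  obtain ⟨g, c, hgc⟩ := exists_eqOn_closure_affineFun (hFc.sub hGc)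
    (hP.isConnected_compl_of_one_lt_rank one_lt_rank_plane) fun x hx => by
      rw [← sub_sub_sub_cancel_right F G (kinks x C.chain)]
      exact (hF x hx).sub (hG x hx)
  rw [(hP.dense_compl ℝ).closure_eq, Set.eqOn_univ] at hgc
  rw [← sub_eq_zero, hgc]
  exact hΩ.affineFun_eq_zero fun x hx => by rw [← hgc, Pi.sub_apply, h hx, sub_self]

lemma finite_setOf_isVert (E : Finset Seg) : {v | IsVert E v}.Finite := by
  simp only [← ptcVert_ofSegs (m := 0)]
  exact finite_setOf_ptcVert _

namespace IsOmegaPotential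

variable {G : ℝ × ℝ → ℝ}

lemma locallyIntAffine_sub_kinks_extension (hG : IsOmegaPotential Ω E m G)
    (hE : IsPlanarGraph (ofSegs E m)) (hC : ExtendsCurve Ω E m C) (hx : x ∈ interior Ω)
    (hvE : ¬ IsVert E x) (hvC : ¬ ptcVert C x) : LocallyIntAffine (G - kinks x C.chain) x := by
  rw [← sub_sub_sub_cancel_right G _ (kinks x (ofSegs E m).chain)]
  exact (hG.locallyIntAffine_sub_kinks x hx hvE).sub
    (hC.locallyIntAffine_kinks_sub hE (interior_subset hx) hvC hvE)

theorem eqOn (hG : IsOmegaPotential Ω E m G) (hΩ : IsLatticePolygon Ω)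
    (hE : IsPlanarGraph (ofSegs E m)) (hC : ExtendsCurve Ω E m C) (hFc : Continuous F)
    (hF₀ : ∀ x ∈ frontier Ω, F x = 0) (hF : BendsAlong F C) : Set.EqOn F G Ω := by
  have hP := ((finite_setOf_isVert E).union (finite_setOf_ptcVert C)).countable
  have hzero : Set.EqOn (F - G) 0 Ω := by
    refine hΩ.eqOn_zero_of_locallyAffine (hFc.sub hG.continuous) hP ?_ fun x hx => ?_
    · rintro x ⟨hx, hv⟩
      obtain ⟨hvE, hvC⟩ := not_or.1 hv
      rw [← sub_sub_sub_cancel_right F G (kinks x C.chain)]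
      exact (hF x hvC).sub
        (hG.locallyIntAffine_sub_kinks_extension hE hC hx hvE hvC).locallyAffine
    · rw [Pi.sub_apply, hF₀ x hx, hG.eq_zero_of_mem_frontier x hx, sub_zero]
  exact fun x hx => sub_eq_zero.1 (hzero hx)

lemma exists_eqOn_intAffineFun (hG : IsOmegaPotential Ω E m G) (hΩ : IsLatticePolygon Ω)
    (hE : IsPlanarGraph (ofSegs E m)) (hC : ExtendsCurve Ω E m C) (hFc : Continuous F)
    (hF : ∀ x, ¬ ptcVert C x → LocallyIntAffine (F - kinks x C.chain) x) :
    ∃ g : ℤ × ℤ, ∃ c, Set.EqOn (F - G) (affineFun (toR g) c) Ω := by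
  have hP := ((finite_setOf_isVert E).union (finite_setOf_ptcVert C)).countable
  obtain ⟨g, c, hgc⟩ := exists_eqOn_closure_intAffineFun (hFc.sub hG.continuous)
    (isConnected_interior_diff_of_convex one_lt_rank_plane hΩ.convex hΩ.2
      hΩ.isCompact.isBounded hP) fun x ⟨hx, hv⟩ => by
    obtain ⟨hvE, hvC⟩ := not_or.1 hv
    rw [← sub_sub_sub_cancel_right F G (kinks x C.chain)]
    exact (hF x hvC).sub (hG.locallyIntAffine_sub_kinks_extension hE hC hx hvE hvC)
  exact ⟨g, c, hgc.mono (subset_closure_interior_diff_of_convex hΩ.convex hΩ.2 hP)⟩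

end IsOmegaPotential

lemma IsPlaneTropCurve.continuous_potential (hC : IsPlaneTropCurve C) :
    Continuous (potential C.chain) :=
  have hsupp := (Finsupp.mem_supported _ _).1 hC.isPlanarGraph.chain_mem_supported
  _root_.continuous_potential hC.divergence_chain fun _ hr => (hsupp hr).2

lemma IsPlaneTropCurve.potential_eventuallyEq (hC : IsPlaneTropCurve C) (hv : ¬ ptcVert C x) :
    ∃ g ∈ gradients C.chain, ∃ c,
      potential C.chain =ᶠ[𝓝 x] affineFun (toR g) c + kinks x C.chain :=
  have hsupp := (Finsupp.mem_supported _ _).1 hC.isPlanarGraph.chain_mem_supported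
  _root_.potential_eventuallyEq hC.divergence_chain (fun _ hr => (hsupp hr).2)
    fun _ hr h => hv (h ▸ (hsupp hr).1)

lemma IsPlaneTropCurve.isTropPoly_potential_sub_affineFun (hC : IsPlaneTropCurve C) (g : ℤ × ℤ)
    (c : ℝ) : IsTropPoly (potential C.chain - affineFun (toR g) c) := by
  refine isTropPoly_of_eventuallyEq_crease
    (hC.continuous_potential.sub (continuous_affineFun _ _)) (finite_setOf_ptcVert C)
    ((gradients C.chain).image (· - g)) fun x hv => ?_
  obtain ⟨h, hh, b, hb⟩ := hC.potential_eventuallyEq hv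
  obtain ⟨n, l, hkinks⟩ := hC.isPlanarGraph.exists_kinks_chain_eq hv
  refine ⟨h - g, Finset.mem_image_of_mem _ hh, b - c, n, l, ?_⟩
  rw [toR_sub, affineFun_sub, ← hkinks, sub_add_eq_add_sub]
  exact hb.sub .rfl

theorem IsOmegaPotential.exists_isTropPoly {G : ℝ × ℝ → ℝ} (hG : IsOmegaPotential Ω E m G)
    (hΩ : IsLatticePolygon Ω) (hE : IsPlanarGraph (ofSegs E m)) (hC : ExtendsCurve Ω E m C) :
    ∃ F, IsTropPoly F ∧ (∀ x ∈ frontier Ω, F x = 0) ∧ BendsAlong F C := by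
  have hbends {x} (hv : ¬ ptcVert C x) :
      LocallyIntAffine (potential C.chain - kinks x C.chain) x := by
    obtain ⟨g, -, c, h⟩ := hC.1.potential_eventuallyEq hv
    exact .of_eventuallyEq h
  obtain ⟨g, c, hgc⟩ := hG.exists_eqOn_intAffineFun hΩ hE hC hC.1.continuous_potential
    fun _ => hbends
  refine ⟨_, hC.1.isTropPoly_potential_sub_affineFun g c, fun x hx => ?_, fun x hv => ?_⟩
  · rw [Pi.sub_apply, ← hgc (hΩ.isCompact.isClosed.frontier_subset hx), Pi.sub_apply,
      sub_sub_cancel, hG.eq_zero_of_mem_frontier x hx]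
  · rw [sub_right_comm]
    exact (hbends hv).locallyAffine.sub (locallyAffine_iff.2 ⟨toR g, c, .rfl⟩)

end

/-- Let `(E, m)` be an `Ω`-tropical curve and `C` a plane tropical
curve with `C ∩ Ω = (E, m)` as weighted graphs. Then there is a unique tropical
polynomial `F'` vanishing on `∂Ω` whose corner locus, with its canonical weights, is
`C`; moreover the restriction of `F'` to `Ω` does not depend on the choice of the
extension `C`. -/
theorem statement8 (Ω : Set (ℝ × ℝ)) (hΩ : IsLatticePolygon Ω)
    (E : Finset Seg) (m : Seg → ℕ) (hE : OmegaTropCurve Ω E m)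
    (C : PlaneTropData) (hC : ExtendsCurve Ω E m C) :
    (∃! F' : ℝ × ℝ → ℝ, IsTropPoly F' ∧ (∀ x ∈ frontier Ω, F' x = 0) ∧
      RepresentsCornerLocus F' C) ∧
    ∀ F₁ F₂ : ℝ × ℝ → ℝ, IsOmegaPolyOf Ω E m F₁ → IsOmegaPolyOf Ω E m F₂ →
      ∀ x ∈ Ω, F₁ x = F₂ x := by
  obtain ⟨G, hG⟩ := hE.exists_isOmegaPotential hΩ
  constructor
  · simp only [representsCornerLocus_iff_bendsAlong hC.1.isPlanarGraph]
    obtain ⟨F, hF, hF₀, hFC⟩ := hG.exists_isTropPoly hΩ hE.isPlanarGraph hC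
    refine ⟨F, ⟨hF, hF₀, hFC⟩, fun F' ⟨hF', hF'₀, hF'C⟩ => ?_⟩
    exact hF'C.eq_of_eqOn_frontier hΩ hFC hF'.continuous hF.continuous
      fun x hx => (hF'₀ x hx).trans (hF₀ x hx).symm
  · have hrestrict {F} (hF : IsOmegaPolyOf Ω E m F) : Set.EqOn F G Ω := by
      obtain ⟨F', C', hC', hF', hF'₀, hFC', hFF'⟩ := hF
      rw [representsCornerLocus_iff_bendsAlong hC'.1.isPlanarGraph] at hFC'
      exact Set.EqOn.trans hFF' (hG.eqOn hΩ hE.isPlanarGraph hC' hF'.continuous hF'₀ hFC')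
    exact fun F₁ F₂ hF₁ hF₂ x hx => (hrestrict hF₁ hx).trans (hrestrict hF₂ hx).symm
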